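/- arXiv:2110.06418 — 4 statements merged into one kernel-verified Lean document; each statement's English description precedes it below -/
import Mathlib

section
/- Let G(x,u) = A x + B u + f(x,u) with ‖f(x,u)‖ ≤ β(‖x‖² + ‖u‖²) for ‖x‖ + ‖u‖ ≤ r_nl; let γ ∈ (0,1], Q ⪰ I, R ⪰ I, and K be such that √γ·(A+BK) is stable with Lyapunov solution P. Define the averaged nonlinear cost J_nl(K | γ, r) := (d/r²) · E_{x₀ ~ Unif(r·S^{d−1})}[ J_nl(K | γ, x₀) ], where J_nl(K | γ, x₀) := Σ_{t=0}^∞ x_tᵀ(Q + KᵀRK)x_t along x_{t+1} = √γ·G(x_t, K x_t) and S^{d−1} is the unit sphere in ℝ^d. If r ≤ r_nl / (2 β ‖P‖_op²), then | J_nl(K | γ, r) − tr(P) | ≤ 8 d β ‖P‖_op⁴ · r. -/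
open Matrix

/-- A real square matrix is stable if every complex eigenvalue has modulus `< 1`. -/
def IsStable {n : ℕ} (M : Matrix (Fin n) (Fin n) ℝ) : Prop :=
  ∀ μ ∈ spectrum ℂ (M.map Complex.ofReal), ‖μ‖ < 1

/-- Euclidean operator norm of a real matrix. -/
noncomputable def opNorm {p q : ℕ} (M : Matrix (Fin p) (Fin q) ℝ) : ℝ :=
  ‖LinearMap.toContinuousLinearMap (Matrix.toEuclideanLin M)‖

/-- Euclidean norm of a vector in `ℝ^n`. -/
noncomputable def evnorm {n : ℕ} (x : Fin n → ℝ) : ℝ :=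
  ‖(WithLp.equiv 2 (Fin n → ℝ)).symm x‖

/-- `P_{K,γ} = Σ_t γ^t ((A+BK)^t)ᵀ (Q + KᵀRK) (A+BK)^t`, the solution of the discounted
Lyapunov equation when `√γ (A+BK)` is stable. -/
noncomputable def lyapP {d m : ℕ} (A : Matrix (Fin d) (Fin d) ℝ) (B : Matrix (Fin d) (Fin m) ℝ)
    (Q : Matrix (Fin d) (Fin d) ℝ) (R : Matrix (Fin m) (Fin m) ℝ)
    (K : Matrix (Fin m) (Fin d) ℝ) (γ : ℝ) : Matrix (Fin d) (Fin d) ℝ :=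
  ∑' t : ℕ, γ ^ t • (((A + B * K) ^ t)ᵀ * (Q + Kᵀ * R * K) * (A + B * K) ^ t)

open RealInnerProductSpace MeasureTheory

/-- The damped nonlinear trajectory `x_{t+1} = √γ · G(x_t, K x_t)` started at `x0`. -/
noncomputable def nlTraj {d m : ℕ}
    (G : EuclideanSpace ℝ (Fin d) × EuclideanSpace ℝ (Fin m) → EuclideanSpace ℝ (Fin d))
    (γ : ℝ) (K : Matrix (Fin m) (Fin d) ℝ) (x0 : EuclideanSpace ℝ (Fin d)) :
    ℕ → EuclideanSpace ℝ (Fin d)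
  | 0 => x0
  | t + 1 =>
      Real.sqrt γ • G (nlTraj G γ K x0 t, Matrix.toEuclideanLin K (nlTraj G γ K x0 t))

/-- The nonlinear cost of the controller `K` from initial state `x0`. -/
noncomputable def Jnl {d m : ℕ}
    (G : EuclideanSpace ℝ (Fin d) × EuclideanSpace ℝ (Fin m) → EuclideanSpace ℝ (Fin d))
    (Q : Matrix (Fin d) (Fin d) ℝ) (R : Matrix (Fin m) (Fin m) ℝ)
    (K : Matrix (Fin m) (Fin d) ℝ) (γ : ℝ) (x0 : EuclideanSpace ℝ (Fin d)) : ℝ :=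
  ∑' t : ℕ, ⟪nlTraj G γ K x0 t,
      Matrix.toEuclideanLin (Q + Kᵀ * R * K) (nlTraj G γ K x0 t)⟫

/-!
`V x = ⟪x, P x⟫` is a Lyapunov function with stage cost `q x = ⟪x, (Q + Kᵀ R K) x⟫`: along the
linear closed loop it decreases by exactly `q`. Since `Q, R ⪰ I`, the remainder of the nonlinear
system is at most `β q`, so by Cauchy–Schwarz for the form `P` the nonlinear decrease is `q` up to
a relative error `c = β r (2 ‖P‖ - 1 / 2) ≤ 3 / 4`, as long as `V ≤ ‖P‖ r²`; this region is thereby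
invariant. Summing over time gives `|J - V x₀| ≤ c / (1 - c) * V x₀ ≤ 8 β ‖P‖⁴ r³`, and averaging
over an isotropic measure turns `V` into `r² / d * tr P`.
-/

section Dissipation

variable {v q : ℕ → ℝ} {c p : ℝ}

lemma abs_sum_range_add_sub_le (hstep : ∀ t, |v (t + 1) - (v t - q t)| ≤ c * q t) (T : ℕ) :
    |∑ t ∈ Finset.range T, q t + v T - v 0| ≤ c * ∑ t ∈ Finset.range T, q t := by
  have htelescope : ∑ t ∈ Finset.range T, q t + v T - v 0
      = ∑ t ∈ Finset.range T, (v (t + 1) - (v t - q t)) := by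
    rw [add_sub_assoc, ← Finset.sum_range_sub, ← Finset.sum_add_distrib]
    exact Finset.sum_congr rfl fun t _ => by ring
  rw [htelescope, Finset.mul_sum]
  exact (Finset.abs_sum_le_sum_abs _ _).trans (Finset.sum_le_sum fun t _ => hstep t)

lemma sum_range_le_div_of_dissipation (hc : c < 1) (hv : ∀ t, 0 ≤ v t)
    (hstep : ∀ t, |v (t + 1) - (v t - q t)| ≤ c * q t) (T : ℕ) :
    ∑ t ∈ Finset.range T, q t ≤ v 0 / (1 - c) := by
  rw [le_div_iff₀ (sub_pos.2 hc)]
  linarith [hv T, (abs_le.1 (abs_sum_range_add_sub_le hstep T)).2]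

lemma summable_of_dissipation (hc : c < 1) (hv : ∀ t, 0 ≤ v t) (hq : ∀ t, 0 ≤ q t)
    (hstep : ∀ t, |v (t + 1) - (v t - q t)| ≤ c * q t) : Summable q :=
  summable_of_sum_range_le hq (sum_range_le_div_of_dissipation hc hv hstep)

lemma abs_tsum_sub_le_of_dissipation (hc₀ : 0 ≤ c) (hc : c < 1) (hv : ∀ t, 0 ≤ v t)
    (hq : ∀ t, 0 ≤ q t) (hvq : ∀ t, v t ≤ p * q t)
    (hstep : ∀ t, |v (t + 1) - (v t - q t)| ≤ c * q t) :
    |∑' t, q t - v 0| ≤ c * (v 0 / (1 - c)) := by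
  have hsum := summable_of_dissipation hc hv hq hstep
  have hv_lim : Filter.Tendsto v Filter.atTop (nhds 0) :=
    squeeze_zero hv hvq (by simpa using hsum.tendsto_atTop_zero.const_mul p)
  have hlim := ((hsum.hasSum.tendsto_sum_nat.add hv_lim).sub_const (v 0)).abs
  rw [add_zero] at hlim
  refine le_of_tendsto' hlim fun T => (abs_sum_range_add_sub_le hstep T).trans ?_
  gcongr
  exact sum_range_le_div_of_dissipation hc hv hstep T

lemma iterate_le_of_dissipation {X : Type*} {Φ : X → X} {V q : X → ℝ} {ρ : ℝ} (hc : c ≤ 1)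
    (hq : ∀ x, 0 ≤ q x) (hstep : ∀ x, V x ≤ ρ → |V (Φ x) - (V x - q x)| ≤ c * q x)
    {x : X} (hx : V x ≤ ρ) (t : ℕ) : V (Φ^[t] x) ≤ ρ := by
  induction t with
  | zero => exact hx
  | succ t ih =>
    rw [Function.iterate_succ_apply']
    linarith [(abs_le.1 (hstep _ ih)).2, mul_le_of_le_one_left (hq (Φ^[t] x)) hc]

end Dissipation

section PerturbedLyapunov

variable {E : Type*} [NormedAddCommGroup E] [InnerProductSpace ℝ E] {P : E →ₗ[ℝ] E}

lemma abs_inner_le_sqrt_of_isPositive (hP : P.IsPositive) (x y : E) :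
    |⟪x, P y⟫| ≤ √(⟪x, P x⟫ * ⟪y, P y⟫) :=
  Real.abs_le_sqrt <| LinearMap.BilinForm.apply_sq_le_of_symm ((innerₗ E).compl₂ P)
    hP.inner_nonneg_right ⟨fun x y => (hP.isSymmetric x y).symm.trans (real_inner_comm _ _)⟩ x y

lemma abs_inner_add_sub_le_of_isPositive (hP : P.IsPositive) (w g : E) :
    |⟪w + g, P (w + g)⟫ - ⟪w, P w⟫| ≤ 2 * √(⟪w, P w⟫ * ⟪g, P g⟫) + ⟪g, P g⟫ := by
  have hexpand : ⟪w + g, P (w + g)⟫ - ⟪w, P w⟫ = 2 * ⟪w, P g⟫ + ⟪g, P g⟫ := by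
    have hsymm : ⟪g, P w⟫ = ⟪w, P g⟫ := by rw [← hP.isSymmetric, real_inner_comm]
    simp only [map_add, inner_add_left, inner_add_right, hsymm]
    ring
  calc |⟪w + g, P (w + g)⟫ - ⟪w, P w⟫| ≤ |2 * ⟪w, P g⟫| + |⟪g, P g⟫| := hexpand ▸ abs_add_le _ _
    _ = 2 * |⟪w, P g⟫| + ⟪g, P g⟫ := by
      rw [abs_mul, abs_two, abs_of_nonneg (hP.inner_nonneg_right g)]
    _ ≤ 2 * √(⟪w, P w⟫ * ⟪g, P g⟫) + ⟪g, P g⟫ := by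
      gcongr
      exact abs_inner_le_sqrt_of_isPositive hP w g

variable {p β r : ℝ}

/-- The error, relative to the stage cost `q`, in one step of the decrease of `⟪x, P x⟫` when
`P ≤ p` and the dynamics is perturbed by at most `β q` in the region `⟪x, P x⟫ ≤ p r²`: the
cross term contributes `β r (2 p - 1)` and the quadratic term `β r / 2`. -/
noncomputable def stepError (β p r : ℝ) : ℝ := β * r * (2 * p - 1 / 2)

lemma abs_inner_add_sub_le_of_norm_le (hP : P.IsPositive) (hp : 1 ≤ p)
    (hPp : ∀ x, ⟪x, P x⟫ ≤ p * ‖x‖ ^ 2) (hβ : 0 ≤ β) (hr : 0 ≤ r) (hsmall : 2 * β * p ^ 2 * r ≤ 1)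
    {w g : E} {q : ℝ} (hq : 0 ≤ q) (hg : ‖g‖ ≤ β * q) (hwr : q + ⟪w, P w⟫ ≤ p * r ^ 2)
    (hwq : q + ⟪w, P w⟫ ≤ p * q) :
    |⟪w + g, P (w + g)⟫ - ⟪w, P w⟫| ≤ stepError β p r * q := by
  have hw₀ : 0 ≤ ⟪w, P w⟫ := hP.inner_nonneg_right w
  have hw : ⟪w, P w⟫ ≤ (p - 1) * r ^ 2 := by
    refine le_of_mul_le_mul_left ?_ (zero_lt_one.trans_le hp)
    nlinarith
  have hPg : ⟪g, P g⟫ ≤ p * (β * q) ^ 2 := (hPp g).trans (by gcongr)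
  -- AM-GM: `p (p - 1) ≤ (p - 1 / 2) ^ 2`
  have hcross : √(⟪w, P w⟫ * ⟪g, P g⟫) ≤ β * r * q * (p - 1 / 2) := by
    refine Real.sqrt_le_iff.2 ⟨mul_nonneg (by positivity) (by linarith), ?_⟩
    calc ⟪w, P w⟫ * ⟪g, P g⟫ ≤ ((p - 1) * r ^ 2) * (p * (β * q) ^ 2) :=
          mul_le_mul hw hPg (hP.inner_nonneg_right g) (hw₀.trans hw)
      _ = (β * r * q) ^ 2 * (p ^ 2 - p) := by ring
      _ ≤ (β * r * q) ^ 2 * (p - 1 / 2) ^ 2 := by gcongr; linarith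
      _ = (β * r * q * (p - 1 / 2)) ^ 2 := by ring
  have hquad : ⟪g, P g⟫ ≤ β * r * q * (1 / 2) :=
    calc ⟪g, P g⟫ ≤ p * (β * q) ^ 2 := hPg
      _ = p * β ^ 2 * q * q := by ring
      _ ≤ p * β ^ 2 * q * (p * r ^ 2) := by gcongr; linarith
      _ = β * r * q * (2 * β * p ^ 2 * r / 2) := by ring
      _ ≤ β * r * q * (1 / 2) := by gcongr
  rw [stepError]
  linarith [abs_inner_add_sub_le_of_isPositive hP w g]

lemma stepError_nonneg (hp : 1 ≤ p) (hβ : 0 ≤ β) (hr : 0 ≤ r) : 0 ≤ stepError β p r :=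
  mul_nonneg (by positivity) (by linarith)

lemma stepError_le_three_quarters (hp : 1 ≤ p) (hsmall : 2 * β * p ^ 2 * r ≤ 1) :
    stepError β p r ≤ 3 / 4 := by
  rw [stepError]
  refine le_of_mul_le_mul_right ?_ (show 0 < 4 * p ^ 2 by positivity)
  calc β * r * (2 * p - 1 / 2) * (4 * p ^ 2) = 2 * β * p ^ 2 * r * (4 * p - 1) := by ring
    _ ≤ 1 * (4 * p - 1) := by gcongr; linarith
    _ ≤ 3 / 4 * (4 * p ^ 2) := by nlinarith [sq_nonneg (p - 1)]

lemma stepError_mul_le (hp : 1 ≤ p) (hβ : 0 ≤ β) (hr : 0 ≤ r) :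
    stepError β p r * (4 * (p * r ^ 2)) ≤ 8 * β * p ^ 4 * r ^ 3 := by
  have hpow : p ^ 2 ≤ p ^ 4 := pow_le_pow_right₀ hp (by norm_num)
  calc stepError β p r * (4 * (p * r ^ 2)) = β * r ^ 3 * (8 * p ^ 2 - 2 * p) := by
        rw [stepError]
        ring
    _ ≤ β * r ^ 3 * (8 * p ^ 4) := by gcongr; linarith
    _ = 8 * β * p ^ 4 * r ^ 3 := by ring

theorem summable_and_abs_tsum_iterate_sub_inner_le {M : E → E} {q : E → ℝ} {Φ : E → E}
    (hP : P.IsPositive) (hp : 1 ≤ p) (hPp : ∀ x, ⟪x, P x⟫ ≤ p * ‖x‖ ^ 2)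
    (hq : ∀ x, ‖x‖ ^ 2 ≤ q x) (hlyap : ∀ x, ⟪x, P x⟫ = q x + ⟪M x, P (M x)⟫)
    (hβ : 0 ≤ β) (hr : 0 ≤ r) (hsmall : 2 * β * p ^ 2 * r ≤ 1)
    (hΦ : ∀ x, ⟪x, P x⟫ ≤ p * r ^ 2 → ‖Φ x - M x‖ ≤ β * q x) {x : E} (hx : ‖x‖ ≤ r) :
    Summable (fun t => q (Φ^[t] x)) ∧
      |∑' t, q (Φ^[t] x) - ⟪x, P x⟫| ≤ 8 * β * p ^ 4 * r ^ 3 := by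
  have hq₀ (y : E) : 0 ≤ q y := (sq_nonneg _).trans (hq y)
  have hPq (y : E) : ⟪y, P y⟫ ≤ p * q y := (hPp y).trans (by gcongr; exact hq y)
  have hstep (y : E) (hy : ⟪y, P y⟫ ≤ p * r ^ 2) :
      |⟪Φ y, P (Φ y)⟫ - (⟪y, P y⟫ - q y)| ≤ stepError β p r * q y := by
    have hbound := abs_inner_add_sub_le_of_norm_le hP hp hPp hβ hr hsmall (hq₀ y) (hΦ y hy)
      (hlyap y ▸ hy) (hlyap y ▸ hPq y)
    rwa [add_sub_cancel, eq_sub_of_add_eq' (hlyap y).symm] at hbound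
  have hc := stepError_le_three_quarters hp hsmall
  have hc₁ : stepError β p r < 1 := by linarith
  have hc₀ : 0 ≤ stepError β p r := stepError_nonneg hp hβ hr
  have hx' : ⟪x, P x⟫ ≤ p * r ^ 2 := (hPp x).trans (by gcongr)
  have hstep_iter (t : ℕ) := hstep _
    (iterate_le_of_dissipation hc₁.le hq₀ hstep hx' t)
  simp only [← Function.iterate_succ_apply' Φ] at hstep_iter
  have hP_iter (t : ℕ) : 0 ≤ ⟪Φ^[t] x, P (Φ^[t] x)⟫ := hP.inner_nonneg_right _
  refine ⟨summable_of_dissipation hc₁ hP_iter (fun t => hq₀ _) hstep_iter, ?_⟩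
  calc |∑' t, q (Φ^[t] x) - ⟪x, P x⟫|
      ≤ stepError β p r * (⟪x, P x⟫ / (1 - stepError β p r)) :=
        abs_tsum_sub_le_of_dissipation hc₀ hc₁ hP_iter (fun t => hq₀ _) (fun t => hPq _)
          hstep_iter
    _ ≤ stepError β p r * (4 * (p * r ^ 2)) := by
        gcongr
        rw [div_le_iff₀ (by linarith)]
        nlinarith [hP.inner_nonneg_right x]
    _ ≤ 8 * β * p ^ 4 * r ^ 3 := stepError_mul_le hp hβ hr

end PerturbedLyapunov

section LyapunovSeries

lemma eventually_norm_pow_le_of_spectralRadius_lt {A : Type*} [NormedRing A] [NormedAlgebra ℂ A]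
    [CompleteSpace A] {a : A} {c : NNReal} (h : spectralRadius ℂ a < c) :
    ∀ᶠ t in Filter.atTop, ‖a ^ t‖ ≤ c ^ t := by
  have hroot :=
    (spectrum.pow_nnnorm_pow_one_div_tendsto_nhds_spectralRadius a).eventually_lt_const h
  filter_upwards [hroot, Filter.eventually_ne_atTop 0] with t ht ht₀
  have hpow := ENNReal.rpow_le_rpow ht.le t.cast_nonneg
  rw [one_div, ENNReal.rpow_inv_rpow (Nat.cast_ne_zero.2 ht₀), ENNReal.rpow_natCast] at hpow
  exact_mod_cast hpow

open scoped Matrix.Norms.Frobenius in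
lemma IsStable.exists_eventually_norm_pow_le {d : ℕ} {M : Matrix (Fin d) (Fin d) ℝ}
    (hM : IsStable M) : ∃ c : NNReal, c < 1 ∧ ∀ᶠ t in Filter.atTop, ‖M ^ t‖ ≤ c ^ t := by
  let N : Matrix (Fin d) (Fin d) ℂ := M.map Complex.ofReal
  have : CompleteSpace (Matrix (Fin d) (Fin d) ℂ) := FiniteDimensional.complete ℂ _
  have hN : spectralRadius ℂ N < (1 : NNReal) := by
    rcases subsingleton_or_nontrivial (Matrix (Fin d) (Fin d) ℂ)
    · simp [spectrum.SpectralRadius.of_subsingleton]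
    · exact spectrum.spectralRadius_lt_of_forall_lt N fun k hk => by exact_mod_cast hM k hk
  obtain ⟨c, hNc, hc⟩ := ENNReal.lt_iff_exists_nnreal_btwn.1 hN
  refine ⟨c, by exact_mod_cast hc, ?_⟩
  filter_upwards [eventually_norm_pow_le_of_spectralRadius_lt hNc] with t ht
  have hNpow : N ^ t = (M ^ t).map Complex.ofReal :=
    (map_pow (Complex.ofRealHom.mapMatrix (m := Fin d)) M t).symm
  rwa [hNpow, Matrix.frobenius_norm_map_eq _ _ Complex.norm_real] at ht

open scoped Matrix.Norms.Frobenius in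
lemma IsStable.summable_transpose_pow_mul_mul_pow {d : ℕ} {M : Matrix (Fin d) (Fin d) ℝ}
    (hM : IsStable M) (S : Matrix (Fin d) (Fin d) ℝ) :
    Summable fun t : ℕ => (M ^ t)ᵀ * S * M ^ t := by
  obtain ⟨c, hc, hbound⟩ := hM.exists_eventually_norm_pow_le
  have hgeom : Summable fun t : ℕ => ‖S‖ * ((c : ℝ) ^ 2) ^ t :=
    (summable_geometric_of_lt_one (by positivity) (pow_lt_one₀ c.2 hc two_ne_zero)).mul_left _
  have : CompleteSpace (Matrix (Fin d) (Fin d) ℝ) := FiniteDimensional.complete ℝ _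
  refine Summable.of_norm_bounded_eventually_nat hgeom ?_
  filter_upwards [hbound] with t ht
  calc ‖(M ^ t)ᵀ * S * M ^ t‖ ≤ ‖(M ^ t)ᵀ‖ * ‖S‖ * ‖M ^ t‖ := norm_mul₃_le
    _ = ‖M ^ t‖ * ‖S‖ * ‖M ^ t‖ := by rw [Matrix.frobenius_norm_transpose]
    _ ≤ c ^ t * ‖S‖ * c ^ t := by gcongr
    _ = ‖S‖ * (c ^ 2) ^ t := by ring

lemma isClosed_setOf_posSemidef {n R : Type*} [Finite n] [Ring R] [PartialOrder R] [StarRing R]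
    [TopologicalSpace R] [IsTopologicalRing R] [ContinuousStar R] [OrderClosedTopology R] :
    IsClosed {P : Matrix n n R | P.PosSemidef} := by
  cases nonempty_fintype n
  simp only [Matrix.posSemidef_iff_dotProduct_mulVec, Set.ofPred_and, Set.ofPred_forall]
  exact (isClosed_eq (by fun_prop) (by fun_prop)).inter
    (isClosed_iInter fun x => isClosed_le (by fun_prop) (by fun_prop))

lemma posSemidef_of_hasSum {ι n R : Type*} [Finite n] [Ring R] [PartialOrder R] [StarRing R]
    [AddLeftMono R] [TopologicalSpace R] [IsTopologicalRing R] [ContinuousStar R]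
    [OrderClosedTopology R] {f : ι → Matrix n n R} {P : Matrix n n R}
    (hf : HasSum f P) (hpos : ∀ i, (f i).PosSemidef) : P.PosSemidef :=
  isClosed_setOf_posSemidef.mem_of_tendsto hf
    (.of_forall fun s => Matrix.posSemidef_sum s fun i _ => hpos i)

lemma lyapunov_eq_of_hasSum {n R : Type*} [Fintype n] [DecidableEq n] [CommRing R]
    [TopologicalSpace R] [IsTopologicalRing R] [T2Space R] {M S P : Matrix n n R}
    (hP : HasSum (fun t : ℕ => (M ^ t)ᵀ * S * M ^ t) P) : P = Mᵀ * P * M + S := by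
  have htail : HasSum (fun t : ℕ => (M ^ (t + 1))ᵀ * S * M ^ (t + 1)) (Mᵀ * P * M) := by
    simpa only [pow_succ, Matrix.transpose_mul, Matrix.mul_assoc] using
      (hP.mul_left Mᵀ).mul_right M
  simpa using hP.unique ((hasSum_nat_add_iff 1).1 htail)

end LyapunovSeries

lemma inner_self_apply_eq_sum {E ι : Type*} [NormedAddCommGroup E] [InnerProductSpace ℝ E]
    [FiniteDimensional ℝ E] [Fintype ι] (b : OrthonormalBasis ι ℝ E) (T : E →ₗ[ℝ] E) (x : E) :
    ⟪x, T x⟫ = ∑ i, ⟪b i, x⟫ * ⟪T.adjoint (b i), x⟫ := by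
  rw [← b.sum_inner_mul_inner]
  exact Finset.sum_congr rfl fun i _ => by rw [T.adjoint_inner_left, real_inner_comm]

section IsotropicMeasure

variable {E : Type*} [NormedAddCommGroup E] [InnerProductSpace ℝ E] [MeasurableSpace E]
  {μ : Measure E} {σ : ℝ}

lemma integrable_inner_mul_inner (hμ : MemLp id 2 μ) (v w : E) :
    Integrable (fun x => ⟪v, x⟫ * ⟪w, x⟫) μ :=
  (hμ.const_inner v).integrable_mul (hμ.const_inner w)

lemma integral_inner_mul_inner_of_isotropic (hμ : MemLp id 2 μ)
    (hiso : ∀ v, ∫ x, ⟪v, x⟫ ^ 2 ∂μ = σ * ‖v‖ ^ 2) (v w : E) :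
    ∫ x, ⟪v, x⟫ * ⟪w, x⟫ ∂μ = σ * ⟪v, w⟫ := by
  have hsq (v : E) : Integrable (fun x => ⟪v, x⟫ ^ 2) μ := by
    simpa only [sq] using integrable_inner_mul_inner hμ v v
  calc ∫ x, ⟪v, x⟫ * ⟪w, x⟫ ∂μ
      = ∫ x, 4⁻¹ * (⟪v + w, x⟫ ^ 2 - ⟪v - w, x⟫ ^ 2) ∂μ := by
        simp only [inner_add_left, inner_sub_left]
        congr with x
        ring
    _ = 4⁻¹ * (σ * ‖v + w‖ ^ 2 - σ * ‖v - w‖ ^ 2) := by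
        rw [integral_const_mul, integral_sub (hsq _) (hsq _), hiso, hiso]
    _ = σ * ⟪v, w⟫ := by
        rw [norm_add_sq_real, norm_sub_sq_real]
        ring

lemma integral_inner_sq_eq_of_norm_eq [BorelSpace E]
    (hinv : ∀ O : E ≃ₗᵢ[ℝ] E, μ.map O = μ) {v w : E} (h : ‖v‖ = ‖w‖) :
    ∫ x, ⟪v, x⟫ ^ 2 ∂μ = ∫ x, ⟪w, x⟫ ^ 2 ∂μ := by
  -- a reflection carries `v` to `w`
  let O : E ≃ₗᵢ[ℝ] E := (ℝ ∙ (v - w))ᗮ.reflection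
  have hO : O v = w := Submodule.reflection_sub h
  have hpres : MeasurePreserving O μ μ := ⟨O.continuous.measurable, hinv O⟩
  rw [← hpres.integral_comp O.toHomeomorph.measurableEmbedding fun x => ⟪w, x⟫ ^ 2]
  simp only [← hO, O.inner_map_map]

variable [FiniteDimensional ℝ E]

lemma integrable_inner_self_apply (hμ : MemLp id 2 μ) (T : E →ₗ[ℝ] E) :
    Integrable (fun x => ⟪x, T x⟫) μ := by
  simp only [inner_self_apply_eq_sum (stdOrthonormalBasis ℝ E)]
  exact integrable_finsetSum _ fun i _ => integrable_inner_mul_inner hμ _ _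

lemma integral_inner_self_apply_of_isotropic (hμ : MemLp id 2 μ)
    (hiso : ∀ v, ∫ x, ⟪v, x⟫ ^ 2 ∂μ = σ * ‖v‖ ^ 2) (T : E →ₗ[ℝ] E) :
    ∫ x, ⟪x, T x⟫ ∂μ = σ * T.trace ℝ E := by
  let b := stdOrthonormalBasis ℝ E
  simp only [inner_self_apply_eq_sum b]
  rw [integral_finsetSum _ fun i _ => integrable_inner_mul_inner hμ _ _,
    T.trace_eq_sum_inner b, Finset.mul_sum]
  refine Finset.sum_congr rfl fun i _ => ?_
  rw [integral_inner_mul_inner_of_isotropic hμ hiso, T.adjoint_inner_right, real_inner_comm]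

lemma integral_inner_sq_of_invariant [BorelSpace E] (hμ : MemLp id 2 μ)
    (hinv : ∀ O : E ≃ₗᵢ[ℝ] E, μ.map O = μ) (v : E) :
    ∫ x, ⟪v, x⟫ ^ 2 ∂μ = (∫ x, ‖x‖ ^ 2 ∂μ) / Module.finrank ℝ E * ‖v‖ ^ 2 := by
  let b := stdOrthonormalBasis ℝ E
  have hbasis (i) : ‖v‖ ^ 2 * ∫ x, ⟪b i, x⟫ ^ 2 ∂μ = ∫ x, ⟪v, x⟫ ^ 2 ∂μ := by
    rw [← integral_const_mul, ← integral_inner_sq_eq_of_norm_eq hinv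
      (show ‖‖v‖ • b i‖ = ‖v‖ by simp [norm_smul])]
    simp only [real_inner_smul_left, mul_pow]
  have hsum : ‖v‖ ^ 2 * ∫ x, ‖x‖ ^ 2 ∂μ = Module.finrank ℝ E * ∫ x, ⟪v, x⟫ ^ 2 ∂μ := by
    have hcoord (i) : Integrable (fun x => ⟪b i, x⟫ ^ 2) μ := (hμ.const_inner (b i)).integrable_sq
    simp_rw [fun x : E => (b.sum_sq_inner_right x).symm]
    rw [integral_finsetSum _ fun i _ => hcoord i, b.sum_sq_inner_right, Finset.mul_sum]
    simp [hbasis]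
  rcases subsingleton_or_nontrivial E
  · simp [Subsingleton.elim v 0]
  · have : (Module.finrank ℝ E : ℝ) ≠ 0 := by simpa using Module.finrank_pos.ne'
    field_simp
    linarith

lemma integral_inner_sq_of_invariant_of_norm_eq [BorelSpace E] [IsProbabilityMeasure μ] {r : ℝ}
    (hnorm : ∀ᵐ x ∂μ, ‖x‖ = r) (hinv : ∀ O : E ≃ₗᵢ[ℝ] E, μ.map O = μ) (v : E) :
    ∫ x, ⟪v, x⟫ ^ 2 ∂μ = r ^ 2 / Module.finrank ℝ E * ‖v‖ ^ 2 := by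
  have hμ : MemLp id 2 μ := .of_bound aestronglyMeasurable_id r (hnorm.mono fun x hx => hx.le)
  have hsq : ∫ x, ‖x‖ ^ 2 ∂μ = r ^ 2 := by
    rw [integral_congr_ae (hnorm.mono fun x hx => congrArg (· ^ 2) hx)]
    simp
  rw [integral_inner_sq_of_invariant hμ hinv, hsq]

end IsotropicMeasure

lemma abs_integral_sub_integral_le {α : Type*} [MeasurableSpace α] {μ : Measure α}
    [IsProbabilityMeasure μ] {f g : α → ℝ} {C : ℝ} (hf : AEStronglyMeasurable f μ)
    (hg : Integrable g μ) (hfg : ∀ᵐ x ∂μ, |f x - g x| ≤ C) :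
    |∫ x, f x ∂μ - ∫ x, g x ∂μ| ≤ C := by
  have hsub : Integrable (f - g) μ := .of_bound (hf.sub hg.aestronglyMeasurable) C hfg
  rw [← integral_sub (by simpa using hsub.add hg) hg]
  simpa using norm_integral_le_of_norm_le_const (f := fun x => f x - g x) hfg

section ClosedLoop

lemma inner_toEuclideanLin_transpose {m n : Type*} [Fintype m] [Fintype n] [DecidableEq m]
    [DecidableEq n] (M : Matrix m n ℝ) (x : EuclideanSpace ℝ n) (y : EuclideanSpace ℝ m) :
    ⟪x, Matrix.toEuclideanLin Mᵀ y⟫ = ⟪Matrix.toEuclideanLin M x, y⟫ := by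
  rw [← Matrix.conjTranspose_eq_transpose_of_trivial,
    Matrix.toEuclideanLin_conjTranspose_eq_adjoint, LinearMap.adjoint_inner_right]

lemma inner_toEuclideanLin_transpose_mul_mul {m n : Type*} [Fintype m] [Fintype n] [DecidableEq m]
    [DecidableEq n] (M : Matrix m n ℝ) (N : Matrix m m ℝ) (x : EuclideanSpace ℝ n) :
    ⟪x, Matrix.toEuclideanLin (Mᵀ * N * M) x⟫ =
      ⟪Matrix.toEuclideanLin M x, Matrix.toEuclideanLin N (Matrix.toEuclideanLin M x)⟫ := by
  rw [← inner_toEuclideanLin_transpose, Matrix.mul_assoc]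
  simp [Matrix.toLpLin_apply]

lemma norm_sq_le_inner_toEuclideanLin {n : Type*} [Fintype n] [DecidableEq n] {N : Matrix n n ℝ}
    (hN : (N - 1).PosSemidef) (x : EuclideanSpace ℝ n) :
    ‖x‖ ^ 2 ≤ ⟪x, Matrix.toEuclideanLin N x⟫ := by
  have hpos := (Matrix.isPositive_toEuclideanLin_iff.2 hN).inner_nonneg_right x
  have hone : Matrix.toEuclideanLin (1 : Matrix n n ℝ) x = x := by simp
  rwa [map_sub, LinearMap.sub_apply, hone, inner_sub_right, real_inner_self_eq_norm_sq,
    sub_nonneg] at hpos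

lemma inner_toEuclideanLin_le_opNorm {d : ℕ} (N : Matrix (Fin d) (Fin d) ℝ)
    (x : EuclideanSpace ℝ (Fin d)) :
    ⟪x, Matrix.toEuclideanLin N x⟫ ≤ opNorm N * ‖x‖ ^ 2 :=
  calc ⟪x, Matrix.toEuclideanLin N x⟫ ≤ ‖x‖ * ‖Matrix.toEuclideanLin N x‖ := real_inner_le_norm _ _
    _ ≤ ‖x‖ * (opNorm N * ‖x‖) := by
      gcongr
      exact (LinearMap.toContinuousLinearMap (Matrix.toEuclideanLin N)).le_opNorm x
    _ = opNorm N * ‖x‖ ^ 2 := by ring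

lemma trace_toEuclideanLin {n : Type*} [Fintype n] [DecidableEq n] (N : Matrix n n ℝ) :
    LinearMap.trace ℝ (EuclideanSpace ℝ n) (Matrix.toEuclideanLin N) = N.trace :=
  Matrix.trace_toLin_eq N (PiLp.basisFun 2 ℝ n)

variable {d m : ℕ} {A : Matrix (Fin d) (Fin d) ℝ} {B : Matrix (Fin d) (Fin m) ℝ}
  {Q : Matrix (Fin d) (Fin d) ℝ} {R : Matrix (Fin m) (Fin m) ℝ} {K : Matrix (Fin m) (Fin d) ℝ}
  {γ β ρ r : ℝ}
  {G : EuclideanSpace ℝ (Fin d) × EuclideanSpace ℝ (Fin m) → EuclideanSpace ℝ (Fin d)}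

lemma norm_sq_add_norm_sq_le_inner_stageCost (hQ : (Q - 1).PosSemidef) (hR : (R - 1).PosSemidef)
    (x : EuclideanSpace ℝ (Fin d)) :
    ‖x‖ ^ 2 + ‖Matrix.toEuclideanLin K x‖ ^ 2
      ≤ ⟪x, Matrix.toEuclideanLin (Q + Kᵀ * R * K) x⟫ := by
  rw [map_add, LinearMap.add_apply, inner_add_right, inner_toEuclideanLin_transpose_mul_mul]
  exact add_le_add (norm_sq_le_inner_toEuclideanLin hQ x) (norm_sq_le_inner_toEuclideanLin hR _)

lemma posSemidef_stageCost (hQ : (Q - 1).PosSemidef) (hR : (R - 1).PosSemidef) :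
    (Q + Kᵀ * R * K).PosSemidef := by
  have hQ' : Q.PosSemidef := by simpa using hQ.add .one
  have hR' : R.PosSemidef := by simpa using hR.add .one
  exact hQ'.add (by simpa using hR'.conjTranspose_mul_mul_same K)

lemma hasSum_lyapP (hγ : 0 ≤ γ) (hstab : IsStable (√γ • (A + B * K))) :
    HasSum (fun t : ℕ => ((√γ • (A + B * K)) ^ t)ᵀ * (Q + Kᵀ * R * K) * (√γ • (A + B * K)) ^ t)
      (lyapP A B Q R K γ) := by
  convert (hstab.summable_transpose_pow_mul_mul_pow (Q + Kᵀ * R * K)).hasSum using 1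
  refine tsum_congr fun t => ?_
  simp only [smul_pow, Matrix.transpose_smul, Matrix.smul_mul, Matrix.mul_smul, smul_smul,
    ← mul_pow, Real.mul_self_sqrt hγ]

lemma posSemidef_lyapP (hγ : 0 ≤ γ) (hstab : IsStable (√γ • (A + B * K)))
    (hQ : (Q - 1).PosSemidef) (hR : (R - 1).PosSemidef) : (lyapP A B Q R K γ).PosSemidef :=
  posSemidef_of_hasSum (hasSum_lyapP hγ hstab) fun t => by
    simpa using (posSemidef_stageCost hQ hR).conjTranspose_mul_mul_same ((√γ • (A + B * K)) ^ t)

lemma inner_lyapP_eq_add (hγ : 0 ≤ γ) (hstab : IsStable (√γ • (A + B * K)))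
    (x : EuclideanSpace ℝ (Fin d)) :
    ⟪x, Matrix.toEuclideanLin (lyapP A B Q R K γ) x⟫
      = ⟪x, Matrix.toEuclideanLin (Q + Kᵀ * R * K) x⟫
        + ⟪Matrix.toEuclideanLin (√γ • (A + B * K)) x, Matrix.toEuclideanLin (lyapP A B Q R K γ)
            (Matrix.toEuclideanLin (√γ • (A + B * K)) x)⟫ := by
  conv_lhs => rw [lyapunov_eq_of_hasSum (hasSum_lyapP hγ hstab)]
  rw [map_add, LinearMap.add_apply, inner_add_right, inner_toEuclideanLin_transpose_mul_mul,
    add_comm]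

lemma inner_stageCost_le_inner_lyapP (hγ : 0 ≤ γ) (hstab : IsStable (√γ • (A + B * K)))
    (hQ : (Q - 1).PosSemidef) (hR : (R - 1).PosSemidef) (x : EuclideanSpace ℝ (Fin d)) :
    ⟪x, Matrix.toEuclideanLin (Q + Kᵀ * R * K) x⟫
      ≤ ⟪x, Matrix.toEuclideanLin (lyapP A B Q R K γ) x⟫ := by
  rw [inner_lyapP_eq_add hγ hstab, le_add_iff_nonneg_right]
  exact (Matrix.isPositive_toEuclideanLin_iff.2
    (posSemidef_lyapP hγ hstab hQ hR)).inner_nonneg_right _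

lemma one_le_opNorm_lyapP [NeZero d] (hγ : 0 ≤ γ) (hstab : IsStable (√γ • (A + B * K)))
    (hQ : (Q - 1).PosSemidef) (hR : (R - 1).PosSemidef) : 1 ≤ opNorm (lyapP A B Q R K γ) := by
  obtain ⟨z, hz⟩ := exists_ne (0 : EuclideanSpace ℝ (Fin d))
  have hlower := norm_sq_add_norm_sq_le_inner_stageCost (K := K) hQ hR z
  have hupper := (inner_stageCost_le_inner_lyapP hγ hstab hQ hR z).trans
    (inner_toEuclideanLin_le_opNorm _ z)
  refine le_of_mul_le_mul_right ?_ (show 0 < ‖z‖ ^ 2 by positivity)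
  linarith [sq_nonneg ‖Matrix.toEuclideanLin K z‖]

/-- One step `x ↦ √γ · G(x, K x)` of the damped nonlinear system under the controller `K`. -/
noncomputable def closedLoop
    (G : EuclideanSpace ℝ (Fin d) × EuclideanSpace ℝ (Fin m) → EuclideanSpace ℝ (Fin d))
    (γ : ℝ) (K : Matrix (Fin m) (Fin d) ℝ) (x : EuclideanSpace ℝ (Fin d)) :
    EuclideanSpace ℝ (Fin d) :=
  √γ • G (x, Matrix.toEuclideanLin K x)

lemma nlTraj_eq_iterate_closedLoop (x : EuclideanSpace ℝ (Fin d)) (t : ℕ) :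
    nlTraj G γ K x t = (closedLoop G γ K)^[t] x := by
  induction t with
  | zero => rfl
  | succ t ih => rw [Function.iterate_succ_apply', ← ih, nlTraj, closedLoop]

lemma measurable_closedLoop (hG : Measurable G) : Measurable (closedLoop G γ K) :=
  (hG.comp (measurable_id.prodMk
    (LinearMap.continuous_of_finiteDimensional _).measurable)).const_smul √γ

lemma norm_closedLoop_sub_le (hγ : γ ≤ 1)
    (hf : ∀ (x : EuclideanSpace ℝ (Fin d)) (u : EuclideanSpace ℝ (Fin m)), ‖x‖ + ‖u‖ ≤ ρ →
      ‖G (x, u) - Matrix.toEuclideanLin A x - Matrix.toEuclideanLin B u‖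
        ≤ β * (‖x‖ ^ 2 + ‖u‖ ^ 2))
    {x : EuclideanSpace ℝ (Fin d)} (hx : ‖x‖ + ‖Matrix.toEuclideanLin K x‖ ≤ ρ) :
    ‖closedLoop G γ K x - Matrix.toEuclideanLin (√γ • (A + B * K)) x‖
      ≤ β * (‖x‖ ^ 2 + ‖Matrix.toEuclideanLin K x‖ ^ 2) := by
  have hsplit : closedLoop G γ K x - Matrix.toEuclideanLin (√γ • (A + B * K)) x =
      √γ • (G (x, Matrix.toEuclideanLin K x) - Matrix.toEuclideanLin A x
        - Matrix.toEuclideanLin B (Matrix.toEuclideanLin K x)) := by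
    simp [closedLoop, Matrix.toLpLin_apply, smul_sub, sub_sub]
  calc ‖closedLoop G γ K x - Matrix.toEuclideanLin (√γ • (A + B * K)) x‖
      = √γ * ‖G (x, Matrix.toEuclideanLin K x) - Matrix.toEuclideanLin A x
          - Matrix.toEuclideanLin B (Matrix.toEuclideanLin K x)‖ := by
        rw [hsplit, norm_smul, Real.norm_of_nonneg (Real.sqrt_nonneg γ)]
    _ ≤ ‖G (x, Matrix.toEuclideanLin K x) - Matrix.toEuclideanLin A x
          - Matrix.toEuclideanLin B (Matrix.toEuclideanLin K x)‖ :=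
        mul_le_of_le_one_left (norm_nonneg _) (Real.sqrt_le_one.2 hγ)
    _ ≤ β * (‖x‖ ^ 2 + ‖Matrix.toEuclideanLin K x‖ ^ 2) := hf _ _ hx

lemma add_le_of_sq_add_sq_le {a b p : ℝ} (hp : 1 ≤ p) (hβ : 1 ≤ β) (hr : 0 ≤ r)
    (hρ : 2 * β * p ^ 2 * r ≤ ρ) (h : a ^ 2 + b ^ 2 ≤ p * r ^ 2) : a + b ≤ ρ := by
  refine (abs_le_of_sq_le_sq' ?_ (by positivity)).2.trans hρ
  have hp₁ : p ≤ p ^ 4 := le_self_pow₀ hp (by norm_num)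
  have hβ₁ : 1 ≤ β ^ 2 := one_le_pow₀ hβ
  calc (a + b) ^ 2 ≤ 2 * (a ^ 2 + b ^ 2) := add_sq_le
    _ ≤ 2 * (p * r ^ 2) := by gcongr
    _ ≤ 4 * (β ^ 2 * p ^ 4 * r ^ 2) := by
      have : p * r ^ 2 ≤ β ^ 2 * p ^ 4 * r ^ 2 := by
        gcongr
        exact hp₁.trans (le_mul_of_one_le_left (by positivity) hβ₁)
      have : 0 ≤ p * r ^ 2 := by positivity
      linarith
    _ = (2 * β * p ^ 2 * r) ^ 2 := by ring

theorem summable_and_abs_Jnl_sub_inner_lyapP_le [NeZero d] (hβ : 1 ≤ β) (hρ : ρ ≤ 1)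
    (hf : ∀ (x : EuclideanSpace ℝ (Fin d)) (u : EuclideanSpace ℝ (Fin m)), ‖x‖ + ‖u‖ ≤ ρ →
      ‖G (x, u) - Matrix.toEuclideanLin A x - Matrix.toEuclideanLin B u‖
        ≤ β * (‖x‖ ^ 2 + ‖u‖ ^ 2))
    (hγ : γ ∈ Set.Icc (0 : ℝ) 1) (hQ : (Q - 1).PosSemidef) (hR : (R - 1).PosSemidef)
    (hstab : IsStable (√γ • (A + B * K))) (hr₀ : 0 ≤ r)
    (hr : r ≤ ρ / (2 * β * opNorm (lyapP A B Q R K γ) ^ 2))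
    {x : EuclideanSpace ℝ (Fin d)} (hx : ‖x‖ ≤ r) :
    Summable (fun t => ⟪nlTraj G γ K x t,
        Matrix.toEuclideanLin (Q + Kᵀ * R * K) (nlTraj G γ K x t)⟫) ∧
      |Jnl G Q R K γ x - ⟪x, Matrix.toEuclideanLin (lyapP A B Q R K γ) x⟫|
        ≤ 8 * β * opNorm (lyapP A B Q R K γ) ^ 4 * r ^ 3 := by
  have hp := one_le_opNorm_lyapP hγ.1 hstab hQ hR
  have hq := norm_sq_add_norm_sq_le_inner_stageCost (K := K) hQ hR
  have hr' : 2 * β * opNorm (lyapP A B Q R K γ) ^ 2 * r ≤ ρ := by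
    rwa [le_div_iff₀' (by positivity)] at hr
  simp only [Jnl, nlTraj_eq_iterate_closedLoop]
  refine summable_and_abs_tsum_iterate_sub_inner_le
    (q := fun y => ⟪y, Matrix.toEuclideanLin (Q + Kᵀ * R * K) y⟫)
    (Matrix.isPositive_toEuclideanLin_iff.2 (posSemidef_lyapP hγ.1 hstab hQ hR)) hp
    (inner_toEuclideanLin_le_opNorm _)
    (fun y => (le_add_of_nonneg_right (sq_nonneg _)).trans (hq y))
    (inner_lyapP_eq_add hγ.1 hstab) (zero_le_one.trans hβ) hr₀ (hr'.trans hρ) (fun y hy => ?_) hx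
  have hsmall : ‖y‖ + ‖Matrix.toEuclideanLin K y‖ ≤ ρ := add_le_of_sq_add_sq_le hp hβ hr₀ hr'
    (((hq y).trans (inner_stageCost_le_inner_lyapP hγ.1 hstab hQ hR y)).trans hy)
  exact (norm_closedLoop_sub_le hγ.2 hf hsmall).trans (by gcongr; exact hq y)

lemma aestronglyMeasurable_Jnl {μ : Measure (EuclideanSpace ℝ (Fin d))} (hG : Measurable G)
    (hsum : ∀ᵐ x ∂μ, Summable (fun t => ⟪nlTraj G γ K x t,
      Matrix.toEuclideanLin (Q + Kᵀ * R * K) (nlTraj G γ K x t)⟫)) :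
    AEStronglyMeasurable (Jnl G Q R K γ) μ := by
  have hlin : Measurable (Matrix.toEuclideanLin (Q + Kᵀ * R * K)) :=
    (LinearMap.continuous_of_finiteDimensional _).measurable
  have hterm (t : ℕ) : Measurable fun x => ⟪nlTraj G γ K x t,
      Matrix.toEuclideanLin (Q + Kᵀ * R * K) (nlTraj G γ K x t)⟫ := by
    simp only [nlTraj_eq_iterate_closedLoop]
    have hiter := (measurable_closedLoop (γ := γ) (K := K) hG).iterate t
    exact hiter.inner (hlin.comp hiter)
  refine aestronglyMeasurable_of_tendsto_ae Filter.atTop (fun T : ℕ =>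
    (Finset.measurable_fun_sum (Finset.range T) fun t _ => hterm t).aestronglyMeasurable) ?_
  filter_upwards [hsum] with x hx
  exact hx.hasSum.tendsto_sum_nat

end ClosedLoop

theorem averaged_similarity_of_costs_general {d m : ℕ}
    {G : EuclideanSpace ℝ (Fin d) × EuclideanSpace ℝ (Fin m) → EuclideanSpace ℝ (Fin d)}
    (hG : Measurable G)
    {A : Matrix (Fin d) (Fin d) ℝ} {B : Matrix (Fin d) (Fin m) ℝ}
    {Q : Matrix (Fin d) (Fin d) ℝ} {R : Matrix (Fin m) (Fin m) ℝ} {K : Matrix (Fin m) (Fin d) ℝ}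
    {β ρ γ r : ℝ} (hβ : 1 ≤ β) (hρ : ρ ≤ 1)
    (hf : ∀ (x : EuclideanSpace ℝ (Fin d)) (u : EuclideanSpace ℝ (Fin m)), ‖x‖ + ‖u‖ ≤ ρ →
      ‖G (x, u) - Matrix.toEuclideanLin A x - Matrix.toEuclideanLin B u‖
        ≤ β * (‖x‖ ^ 2 + ‖u‖ ^ 2))
    (hγ : γ ∈ Set.Icc (0 : ℝ) 1) (hQ : (Q - 1).PosSemidef) (hR : (R - 1).PosSemidef)
    (hstab : IsStable (√γ • (A + B * K))) (hr₀ : 0 < r)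
    (hr : r ≤ ρ / (2 * β * opNorm (lyapP A B Q R K γ) ^ 2))
    {μ : Measure (EuclideanSpace ℝ (Fin d))} [IsProbabilityMeasure μ]
    (hball : ∀ᵐ x ∂μ, ‖x‖ ≤ r) (hiso : ∀ v, ∫ x, ⟪v, x⟫ ^ 2 ∂μ = r ^ 2 / d * ‖v‖ ^ 2) :
    |(d : ℝ) / r ^ 2 * (∫ x, Jnl G Q R K γ x ∂μ) - (lyapP A B Q R K γ).trace|
      ≤ 8 * d * β * opNorm (lyapP A B Q R K γ) ^ 4 * r := by
  rcases d.eq_zero_or_pos with rfl | hd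
  · simp [Matrix.trace]
  have : NeZero d := ⟨hd.ne'⟩
  have hL2 : MemLp id 2 μ := .of_bound aestronglyMeasurable_id r hball
  have hpointwise : ∀ᵐ x ∂μ, _ := hball.mono fun x hx =>
    summable_and_abs_Jnl_sub_inner_lyapP_le hβ hρ hf hγ hQ hR hstab hr₀.le hr hx
  have hquad := integral_inner_self_apply_of_isotropic hL2 hiso
    (Matrix.toEuclideanLin (lyapP A B Q R K γ))
  have hdiff := abs_integral_sub_integral_le
    (aestronglyMeasurable_Jnl hG (hpointwise.mono fun _ h => h.1))
    (integrable_inner_self_apply hL2 _) (hpointwise.mono fun _ h => h.2)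
  rw [hquad, trace_toEuclideanLin] at hdiff
  have hscale : 0 < (d : ℝ) / r ^ 2 := by positivity
  calc |(d : ℝ) / r ^ 2 * (∫ x, Jnl G Q R K γ x ∂μ) - (lyapP A B Q R K γ).trace|
      = d / r ^ 2 *
          |∫ x, Jnl G Q R K γ x ∂μ - r ^ 2 / d * (lyapP A B Q R K γ).trace| := by
        rw [← abs_of_pos hscale, ← abs_mul, abs_of_pos hscale]
        congr 1
        field_simp
    _ ≤ d / r ^ 2 * (8 * β * opNorm (lyapP A B Q R K γ) ^ 4 * r ^ 3) := by gcongr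
    _ = 8 * d * β * opNorm (lyapP A B Q R K γ) ^ 4 * r := by field_simp

/-- Averaged similarity of costs: for `μ` the uniform (rotation-invariant) probability
measure on the sphere of radius `r`, with `r ≤ r_nl/(2β‖P‖²)`, the averaged nonlinear cost
`(d/r²)·E[Jnl]` differs from `tr P` by at most `8dβ‖P‖⁴r`. -/
theorem averaged_similarity_of_costs {d m : ℕ}
    (G : EuclideanSpace ℝ (Fin d) × EuclideanSpace ℝ (Fin m) → EuclideanSpace ℝ (Fin d))
    (hGcont : Continuous G)
    (A : Matrix (Fin d) (Fin d) ℝ) (B : Matrix (Fin d) (Fin m) ℝ)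
    (Q : Matrix (Fin d) (Fin d) ℝ) (R : Matrix (Fin m) (Fin m) ℝ)
    (K : Matrix (Fin m) (Fin d) ℝ)
    (β rnl : ℝ) (hβ : 1 ≤ β) (hrnl0 : 0 < rnl) (hrnl1 : rnl ≤ 1)
    (hf : ∀ (x : EuclideanSpace ℝ (Fin d)) (u : EuclideanSpace ℝ (Fin m)),
      ‖x‖ + ‖u‖ ≤ rnl →
      ‖G (x, u) - Matrix.toEuclideanLin A x - Matrix.toEuclideanLin B u‖
        ≤ β * (‖x‖ ^ 2 + ‖u‖ ^ 2))
    (γ : ℝ) (hγ : γ ∈ Set.Ioc (0 : ℝ) 1)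
    (hQ : (Q - 1).PosSemidef) (hR : (R - 1).PosSemidef)
    (hstab : IsStable (Real.sqrt γ • (A + B * K)))
    (r : ℝ) (hr0 : 0 < r)
    (hr : r ≤ rnl / (2 * β * opNorm (lyapP A B Q R K γ) ^ 2))
    (μ : Measure (EuclideanSpace ℝ (Fin d))) [IsProbabilityMeasure μ]
    (hsupp : μ (Metric.sphere (0 : EuclideanSpace ℝ (Fin d)) r)ᶜ = 0)
    (hinv : ∀ O : EuclideanSpace ℝ (Fin d) ≃ₗᵢ[ℝ] EuclideanSpace ℝ (Fin d),
      μ.map O = μ) :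
    |(d : ℝ) / r ^ 2 * (∫ x0, Jnl G Q R K γ x0 ∂μ) - (lyapP A B Q R K γ).trace|
      ≤ 8 * d * β * opNorm (lyapP A B Q R K γ) ^ 4 * r := by
  have hnorm : ∀ᵐ x ∂μ, ‖x‖ = r := by
    filter_upwards [mem_ae_iff.2 hsupp] with x hx using mem_sphere_zero_iff_norm.1 hx
  exact averaged_similarity_of_costs_general hGcont.measurable hβ hrnl1 hf ⟨hγ.1.le, hγ.2⟩ hQ hR
    hstab hr0 hr (hnorm.mono fun _ h => h.le)
    fun v => by simpa using integral_inner_sq_of_invariant_of_norm_eq hnorm hinv v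
end

section
/- Suppose Q + KᵀRK ⪰ I and the matrix √γ·(A+BK) has some complex eigenvalue of modulus at least 1 (equivalently, spectral radius ≥ 1). Then for every horizon H ≥ 1, the finite-horizon value matrix P_H := Σ_{t=0}^{H−1} γ^t ((A+BK)^t)ᵀ (Q + KᵀRK) (A+BK)^t satisfies tr(P_H) ≥ H. -/
open Matrix

/-! Put `N = √γ • (A + BK)` and `S = Q + KᵀRK`, so that the summand of `P_H` at time `t` is
`(N ^ t)ᵀ S N ^ t`. Since `S ⪰ I`, its trace is at least `tr ((N ^ t)ᵀ N ^ t)`, the squared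
Frobenius norm of `N ^ t`. The Frobenius norm is submultiplicative, hence bounds the modulus of
every eigenvalue, and `μ ^ t` is an eigenvalue of `N ^ t`. So every summand contributes at
least `|μ| ^ (2t) ≥ 1`. -/

section Frobenius

attribute [local instance] Matrix.frobeniusNormedAddCommGroup Matrix.frobeniusNormedSpace

lemma frobenius_norm_sq_eq_sum {m n α : Type*} [Fintype m] [Fintype n] [NormedAddCommGroup α]
    (N : Matrix m n α) : ‖N‖ ^ 2 = ∑ i, ∑ j, ‖N i j‖ ^ 2 := by
  rw [frobenius_norm_def, ← Real.sqrt_eq_rpow, Real.sq_sqrt (by positivity)]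
  simp only [Real.rpow_two]

lemma trace_conjTranspose_mul_self_eq_frobenius_norm_sq {m n 𝕜 : Type*} [Fintype m] [Fintype n]
    [RCLike 𝕜] (N : Matrix m n 𝕜) : (Nᴴ * N).trace = (‖N‖ ^ 2 : ℝ) := by
  rw [frobenius_norm_sq_eq_sum, Finset.sum_comm]
  simp [trace, mul_apply, RCLike.conj_mul]

variable {n : Type*} [Fintype n] [DecidableEq n]

lemma norm_le_frobenius_norm_of_mem_spectrum {𝕜 : Type*} [RCLike 𝕜] {N : Matrix n n 𝕜} {μ : 𝕜}
    (hμ : μ ∈ spectrum 𝕜 N) : ‖μ‖ ≤ ‖N‖ := by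
  rw [← spectrum_toLin', ← Module.End.hasEigenvalue_iff_mem_spectrum] at hμ
  obtain ⟨v, hv⟩ := hμ.exists_hasEigenvector
  have hNv : N * replicateCol Unit v = μ • replicateCol Unit v := by
    rw [← replicateCol_mulVec, ← toLin'_apply, hv.apply_eq_smul, replicateCol_smul]
  have hv_pos : 0 < ‖replicateCol Unit v‖ :=
    norm_pos_iff.mpr (replicateCol_eq_zero v |>.not.mpr hv.2)
  refine le_of_mul_le_mul_right ?_ hv_pos
  calc ‖μ‖ * ‖replicateCol Unit v‖ = ‖N * replicateCol Unit v‖ := by rw [hNv, norm_smul]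
    _ ≤ ‖N‖ * ‖replicateCol Unit v‖ := frobenius_norm_mul _ _

lemma norm_sq_le_trace_transpose_mul_self_of_mem_spectrum {N : Matrix n n ℝ} {μ : ℂ}
    (hμ : μ ∈ spectrum ℂ (N.map Complex.ofReal)) : ‖μ‖ ^ 2 ≤ (Nᵀ * N).trace := by
  rw [← conjTranspose_eq_transpose_of_trivial, trace_conjTranspose_mul_self_eq_frobenius_norm_sq,
    RCLike.ofReal_real_eq_id, id, ← frobenius_norm_map_eq N Complex.ofReal Complex.norm_real]
  gcongr
  exact norm_le_frobenius_norm_of_mem_spectrum hμ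

end Frobenius

lemma trace_conjTranspose_mul_mul_le_of_sub_posSemidef {m n R : Type*} [Fintype m] [Fintype n]
    [Ring R] [PartialOrder R] [StarRing R] [AddLeftMono R] {S T : Matrix m m R}
    (hST : (S - T).PosSemidef) (N : Matrix m n R) :
    (Nᴴ * T * N).trace ≤ (Nᴴ * S * N).trace := by
  have h_nonneg := (hST.conjTranspose_mul_mul_same N).trace_nonneg
  rwa [Matrix.mul_sub, Matrix.sub_mul, trace_sub, sub_nonneg] at h_nonneg

variable {n : Type*} [Fintype n] [DecidableEq n]

lemma norm_pow_sq_le_trace_of_mem_spectrum {N S : Matrix n n ℝ} (hS : (S - 1).PosSemidef) {μ : ℂ}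
    (hμ : μ ∈ spectrum ℂ (N.map Complex.ofReal)) (t : ℕ) :
    (‖μ‖ ^ t) ^ 2 ≤ ((N ^ t)ᵀ * S * N ^ t).trace := by
  have hμ_pow : μ ^ t ∈ spectrum ℂ ((N ^ t).map Complex.ofReal) := by
    have h_map : (N ^ t).map Complex.ofReal = N.map Complex.ofReal ^ t :=
      N.map_pow Complex.ofRealHom t
    exact h_map ▸ spectrum.pow_mem_pow _ t hμ
  calc (‖μ‖ ^ t) ^ 2 = ‖μ ^ t‖ ^ 2 := by rw [norm_pow]
    _ ≤ ((N ^ t)ᵀ * N ^ t).trace :=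
      norm_sq_le_trace_transpose_mul_self_of_mem_spectrum hμ_pow
    _ ≤ ((N ^ t)ᵀ * S * N ^ t).trace := by
      simpa using trace_conjTranspose_mul_mul_le_of_sub_posSemidef hS (N ^ t)

lemma pow_smul_transpose_pow_mul_mul_pow {γ : ℝ} (hγ : 0 ≤ γ) (M S : Matrix n n ℝ) (t : ℕ) :
    γ ^ t • ((M ^ t)ᵀ * S * M ^ t) = ((√γ • M) ^ t)ᵀ * S * (√γ • M) ^ t := by
  rw [smul_pow, transpose_smul, Matrix.smul_mul, Matrix.smul_mul, Matrix.mul_smul, smul_smul,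
    ← mul_pow, Real.mul_self_sqrt hγ]

theorem unstable_finite_horizon_trace_lower_bound_general
    (M S : Matrix n n ℝ) (hS : (S - 1).PosSemidef) {γ : ℝ} (hγ : 0 ≤ γ)
    (hunstab : ∃ μ ∈ spectrum ℂ ((√γ • M).map Complex.ofReal), 1 ≤ ‖μ‖) (H : ℕ) :
    (H : ℝ) ≤ (∑ t ∈ Finset.range H, γ ^ t • ((M ^ t)ᵀ * S * M ^ t)).trace := by
  obtain ⟨μ, hμ, hμ_norm⟩ := hunstab
  calc (H : ℝ) = ∑ _ ∈ Finset.range H, (1 : ℝ) := by simp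
    _ ≤ ∑ t ∈ Finset.range H, (‖μ‖ ^ t) ^ 2 := by
      gcongr
      exact one_le_pow₀ (one_le_pow₀ hμ_norm)
    _ ≤ ∑ t ∈ Finset.range H, (((√γ • M) ^ t)ᵀ * S * (√γ • M) ^ t).trace := by
      gcongr
      exact norm_pow_sq_le_trace_of_mem_spectrum hS hμ _
    _ = (∑ t ∈ Finset.range H, γ ^ t • ((M ^ t)ᵀ * S * M ^ t)).trace := by
      simp only [trace_sum, pow_smul_transpose_pow_mul_mul_pow hγ]

/-- If `Q + KᵀRK ⪰ I` and `√γ(A+BK)` has a complex eigenvalue of modulus at least `1`,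
then the finite-horizon value matrix `P_H` satisfies `tr(P_H) ≥ H` for every `H ≥ 1`. -/
theorem unstable_finite_horizon_trace_lower_bound {d m : ℕ}
    (A : Matrix (Fin d) (Fin d) ℝ) (B : Matrix (Fin d) (Fin m) ℝ)
    (Q : Matrix (Fin d) (Fin d) ℝ) (R : Matrix (Fin m) (Fin m) ℝ)
    (K : Matrix (Fin m) (Fin d) ℝ)
    (hQK : (Q + Kᵀ * R * K - 1).PosSemidef)
    (γ : ℝ) (hγ : γ ∈ Set.Ioc (0 : ℝ) 1)
    (hunstab : ∃ μ ∈ spectrum ℂ ((Real.sqrt γ • (A + B * K)).map Complex.ofReal),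
      1 ≤ ‖μ‖) :
    ∀ H : ℕ, 1 ≤ H →
      (H : ℝ) ≤ (∑ t ∈ Finset.range H,
          γ ^ t • (((A + B * K) ^ t)ᵀ * (Q + Kᵀ * R * K) * (A + B * K) ^ t)).trace := by
  intro H _
  exact unstable_finite_horizon_trace_lower_bound_general _ _ hQK hγ.1.le hunstab H
end

section
/- Let d ≥ 1 and let u and v be independent random vectors, each uniformly distributed on the unit sphere S^{d−1} ⊂ ℝ^d. Then Pr[ ⟨u, v⟩² ≥ 1/d ] ≥ 1/10. -/
open MeasureTheory RealInnerProductSpace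

/-!
By rotation invariance, the probability that `u` is aligned with a fixed `v ≠ 0` does not depend on
`v`, so it may be averaged over a standard Gaussian `v = g`; by Fubini it then suffices to treat a
fixed `u`, of norm one after rescaling. There `X = ⟪u, g⟫` is a standard normal variable independent
of `Y`, the squared norm of the component of `g` orthogonal to `u`, and `u` fails to be aligned with
`g` exactly when `(d - 1) X² < Y`. This never happens for `d = 1`, where `Y = 0`. For `d > 1`, the
normal density is at most `2 / 5` and `2 √s ≤ 1 + s`, so given `Y` it has probability at most
`(2 / 5) (1 + Y / (d - 1))`, whose mean is `4 / 5` because `E Y = d - 1`.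
-/

section GaussianAnticoncentration

open ProbabilityTheory

open scoped ENNReal NNReal

lemma gaussianPDFReal_le_inv_sqrt (m : ℝ) (v : ℝ≥0) (x : ℝ) :
    gaussianPDFReal m v x ≤ (√(2 * Real.pi * v))⁻¹ := by
  have hexp : Real.exp (-(x - m) ^ 2 / (2 * v)) ≤ 1 :=
    Real.exp_le_one_iff.2 (div_nonpos_of_nonpos_of_nonneg (by simp [sq_nonneg]) (by positivity))
  exact mul_le_of_le_one_right (by positivity) hexp

lemma gaussianReal_le_mul_volume (m : ℝ) {v : ℝ≥0} (hv : v ≠ 0) (s : Set ℝ) :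
    gaussianReal m v s ≤ ENNReal.ofReal (√(2 * Real.pi * v))⁻¹ * volume s := by
  rw [gaussianReal_apply m hv, ← setLIntegral_const]
  exact lintegral_mono fun x ↦ ENNReal.ofReal_le_ofReal (gaussianPDFReal_le_inv_sqrt m v x)

lemma gaussianReal_sq_lt_le (s : ℝ) :
    gaussianReal 0 1 {x | x ^ 2 < s} ≤ 2 / 5 * (1 + ENNReal.ofReal s) := by
  have hdensity : (√(2 * Real.pi * (1 : ℝ≥0)))⁻¹ ≤ 2 / 5 := by
    rw [inv_le_comm₀ (by positivity) (by norm_num)]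
    refine Real.le_sqrt_of_sq_le ?_
    have := Real.pi_gt_d2
    push_cast
    linarith
  have hlength : volume {x : ℝ | x ^ 2 < s} ≤ 1 + ENNReal.ofReal s := by
    have hinterval : {x : ℝ | x ^ 2 < s} = Set.Ioo (-√s) √s := by
      ext x
      exact Real.sq_lt
    calc volume {x : ℝ | x ^ 2 < s} = ENNReal.ofReal (√s - -√s) := by
          rw [hinterval, Real.volume_Ioo]
      _ ≤ ENNReal.ofReal (1 + √s ^ 2) :=
          ENNReal.ofReal_le_ofReal (by linarith [sq_nonneg (√s - 1)])
      _ ≤ 1 + ENNReal.ofReal (√s ^ 2) :=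
          ENNReal.ofReal_add_le.trans_eq (by rw [ENNReal.ofReal_one])
      _ = 1 + ENNReal.ofReal s := by simp [Real.sq_sqrt', ENNReal.ofReal_max]
  calc gaussianReal 0 1 {x | x ^ 2 < s}
      ≤ ENNReal.ofReal (√(2 * Real.pi * (1 : ℝ≥0)))⁻¹ * volume {x : ℝ | x ^ 2 < s} :=
        gaussianReal_le_mul_volume 0 one_ne_zero _
    _ ≤ ENNReal.ofReal (2 / 5) * (1 + ENNReal.ofReal s) := by gcongr
    _ = 2 / 5 * (1 + ENNReal.ofReal s) := by
        rw [ENNReal.ofReal_div_of_pos (by norm_num), ENNReal.ofReal_ofNat, ENNReal.ofReal_ofNat]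

variable {Ω : Type*} {mΩ : MeasurableSpace Ω} {P : Measure Ω} {X Y : Ω → ℝ}

lemma measure_sq_lt_le_of_indepFun (hX : HasLaw X (gaussianReal 0 1) P)
    (hY : AEMeasurable Y P) (hXY : X ⟂ᵢ[P] Y) :
    P {ω | X ω ^ 2 < Y ω} ≤ 2 / 5 * (1 + ∫⁻ ω, ENNReal.ofReal (Y ω) ∂P) := by
  have : IsProbabilityMeasure P := hX.isProbabilityMeasure
  have : IsProbabilityMeasure (P.map Y) := Measure.isProbabilityMeasure_map hY
  have hB : MeasurableSet {p : ℝ × ℝ | p.1 ^ 2 < p.2} :=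
    measurableSet_lt (by fun_prop) (by fun_prop)
  have hjoint : HasLaw (fun ω ↦ (X ω, Y ω)) ((gaussianReal 0 1).prod (P.map Y)) P :=
    hXY.hasLaw_prod hX ⟨hY, rfl⟩
  calc P {ω | X ω ^ 2 < Y ω}
      = ((gaussianReal 0 1).prod (P.map Y)) {p : ℝ × ℝ | p.1 ^ 2 < p.2} := hjoint.measure_eq hB
    _ = ∫⁻ y, gaussianReal 0 1 {x | x ^ 2 < y} ∂(P.map Y) := Measure.prod_apply_symm hB
    _ ≤ ∫⁻ y, 2 / 5 * (1 + ENNReal.ofReal y) ∂(P.map Y) := lintegral_mono gaussianReal_sq_lt_le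
    _ = 2 / 5 * (1 + ∫⁻ y, ENNReal.ofReal y ∂(P.map Y)) := by
        rw [lintegral_const_mul _ (by fun_prop), lintegral_add_left (by fun_prop), lintegral_one,
          measure_univ]
    _ = 2 / 5 * (1 + ∫⁻ ω, ENNReal.ofReal (Y ω) ∂P) := by
        rw [lintegral_map' (by fun_prop) hY]

lemma measure_mul_sq_lt_le_of_indepFun (hX : HasLaw X (gaussianReal 0 1) P)
    (hY : AEMeasurable Y P) (hXY : X ⟂ᵢ[P] Y) {c : ℝ≥0}
    (hc : ∫⁻ ω, ENNReal.ofReal (Y ω) ∂P ≤ c) :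
    P {ω | c * X ω ^ 2 < Y ω} ≤ 4 / 5 := by
  rcases eq_zero_or_pos c with rfl | hc₀
  · have hnonpos : ∀ᵐ ω ∂P, Y ω ≤ 0 := by
      have hzero : ∫⁻ ω, ENNReal.ofReal (Y ω) ∂P = 0 := by simpa using hc
      filter_upwards [(lintegral_eq_zero_iff' hY.ennreal_ofReal).1 hzero] with ω hω
      simpa using hω
    have : P {ω | 0 < Y ω} = 0 := by simpa [ae_iff] using hnonpos
    simp [this]
  · have hmean : ∫⁻ ω, ENNReal.ofReal (Y ω / c) ∂P ≤ 1 := by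
      simp only [ENNReal.ofReal_div_of_pos (NNReal.coe_pos.2 hc₀), ENNReal.ofReal_coe_nnreal]
      simp only [div_eq_mul_inv]
      rw [lintegral_mul_const'' _ hY.ennreal_ofReal, ← div_eq_mul_inv]
      exact ENNReal.div_le_of_le_mul (by rwa [one_mul])
    calc P {ω | c * X ω ^ 2 < Y ω} = P {ω | X ω ^ 2 < Y ω / c} := by
          simp only [lt_div_iff₀' (NNReal.coe_pos.2 hc₀)]
      _ ≤ 2 / 5 * (1 + ∫⁻ ω, ENNReal.ofReal (Y ω / c) ∂P) :=
          measure_sq_lt_le_of_indepFun hX (hY.div_const _)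
            (hXY.comp measurable_id (measurable_id.div_const _))
      _ ≤ 2 / 5 * (1 + 1) := by gcongr
      _ = 4 / 5 := by
        rw [one_add_one_eq_two, ← ENNReal.mul_div_right_comm]
        norm_num

end GaussianAnticoncentration

section StdGaussian

open ProbabilityTheory Module

variable {E : Type*} [NormedAddCommGroup E] [InnerProductSpace ℝ E] [FiniteDimensional ℝ E]
  [MeasurableSpace E] [BorelSpace E]

lemma covariance_inner_stdGaussian (x y : E) :
    cov[fun g ↦ ⟪x, g⟫, fun g ↦ ⟪y, g⟫; stdGaussian E] = ⟪x, y⟫ := by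
  rw [← covarianceBilin_apply_eq_cov IsGaussian.memLp_two_id, covarianceBilin_stdGaussian,
    innerSL_apply_apply]

lemma hasLaw_inner_stdGaussian (x : E) :
    HasLaw (fun g ↦ ⟪x, g⟫) (gaussianReal 0 (‖x‖₊ ^ 2)) (stdGaussian E) where
  map_eq := by
    have hmap := IsGaussian.map_eq_gaussianReal (μ := stdGaussian E) (innerSL ℝ x)
    rwa [integral_strongDual_stdGaussian, variance_dual_stdGaussian, innerSL_apply_norm,
      Real.toNNReal_pow (norm_nonneg x), norm_toNNReal] at hmap

lemma lintegral_inner_sq_stdGaussian (x : E) :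
    ∫⁻ g, ENNReal.ofReal (⟪x, g⟫ ^ 2) ∂(stdGaussian E) = ENNReal.ofReal (‖x‖ ^ 2) := by
  have hL2 : MemLp (fun g ↦ ⟪x, g⟫) 2 (stdGaussian E) :=
    IsGaussian.memLp_dual _ (innerSL ℝ x) 2 (by simp)
  rw [← ofReal_integral_eq_lintegral_ofReal hL2.integrable_sq (ae_of_all _ fun g ↦ sq_nonneg _),
    ← variance_of_integral_eq_zero hL2.aemeasurable
      (integral_strongDual_stdGaussian (innerSL ℝ x)),
    ← covariance_self hL2.aemeasurable, covariance_inner_stdGaussian, real_inner_self_eq_norm_sq]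

lemma lintegral_norm_starProjection_sq_stdGaussian (K : Submodule ℝ E) :
    ∫⁻ g, ENNReal.ofReal (‖K.starProjection g‖ ^ 2) ∂(stdGaussian E) = finrank ℝ K := by
  set b := stdOrthonormalBasis ℝ K
  have hnorm (g : E) : ‖K.starProjection g‖ ^ 2 = ∑ i, ⟪(b i : E), g⟫ ^ 2 := by
    rw [K.starProjection_apply, ← Submodule.coe_norm, ← b.sum_sq_inner_right]
    simp
  simp only [hnorm, ENNReal.ofReal_sum_of_nonneg fun _ _ ↦ sq_nonneg _]
  rw [lintegral_finsetSum _ (by fun_prop)]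
  simp [lintegral_inner_sq_stdGaussian, ← Submodule.coe_norm]

lemma indepFun_starProjection_orthogonal_stdGaussian (K : Submodule ℝ E) :
    K.starProjection ⟂ᵢ[stdGaussian E] Kᗮ.starProjection := by
  have hjoint : HasGaussianLaw (fun g ↦ (K.starProjection g, Kᗮ.starProjection g))
      (stdGaussian E) :=
    IsGaussian.hasGaussianLaw_id.map (K.starProjection.prod Kᗮ.starProjection)
  refine hjoint.indepFun_of_covariance_inner fun x y ↦ ?_
  simp only [← Submodule.inner_starProjection_left_eq_right]
  rw [covariance_inner_stdGaussian]
  exact Submodule.inner_right_of_mem_orthogonal (K.starProjection_apply_mem x)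
    (Kᗮ.starProjection_apply_mem y)

lemma stdGaussian_singleton_zero [Nontrivial E] : stdGaussian E {0} = 0 := by
  obtain ⟨x, hx⟩ := exists_ne (0 : E)
  have := nullSingletonClass_gaussianReal (μ := 0) (v := ‖x‖₊ ^ 2) (by simpa)
  have hkernel : stdGaussian E {g | ⟪x, g⟫ = 0} = 0 :=
    ((hasLaw_inner_stdGaussian x).measure_eq (measurableSet_singleton 0)).trans
      (measure_singleton 0)
  exact measure_mono_null (by simp) hkernel

end StdGaussian

section Alignment

open ProbabilityTheory Module

variable {E : Type*} [NormedAddCommGroup E] [InnerProductSpace ℝ E]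

/-- Two vectors are aligned when the squared cosine of their angle is at least `1 / dim E`, the
average over a uniform direction. The homogeneous form makes the zero vector aligned with
everything. -/
def IsAligned (u v : E) : Prop :=
  ‖u‖ ^ 2 * ‖v‖ ^ 2 ≤ finrank ℝ E * ⟪u, v⟫ ^ 2

lemma isAligned_comm {u v : E} : IsAligned u v ↔ IsAligned v u := by
  rw [IsAligned, IsAligned, mul_comm (‖u‖ ^ 2), real_inner_comm]

lemma isAligned_zero_left (v : E) : IsAligned 0 v := by
  simp [IsAligned]

lemma isAligned_smul_left_iff {c : ℝ} (hc : c ≠ 0) {u v : E} :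
    IsAligned (c • u) v ↔ IsAligned u v := by
  have hc₂ : 0 < c ^ 2 := by positivity
  have hnorm : ‖c • u‖ ^ 2 * ‖v‖ ^ 2 = c ^ 2 * (‖u‖ ^ 2 * ‖v‖ ^ 2) := by
    rw [norm_smul, mul_pow, Real.norm_eq_abs, sq_abs, mul_assoc]
  have hinner : finrank ℝ E * ⟪c • u, v⟫ ^ 2 = c ^ 2 * (finrank ℝ E * ⟪u, v⟫ ^ 2) := by
    rw [real_inner_smul_left]
    ring
  rw [IsAligned, hnorm, hinner, mul_le_mul_iff_right₀ hc₂, IsAligned]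

lemma isAligned_smul_right_iff {c : ℝ} (hc : c ≠ 0) {u v : E} :
    IsAligned u (c • v) ↔ IsAligned u v := by
  rw [isAligned_comm, isAligned_smul_left_iff hc, isAligned_comm]

lemma isAligned_map_iff (O : E ≃ₗᵢ[ℝ] E) {u v : E} :
    IsAligned (O u) (O v) ↔ IsAligned u v := by
  simp [IsAligned]

lemma isAligned_iff_of_norm_eq_one [FiniteDimensional ℝ E] {u v : E} (hu : ‖u‖ = 1)
    (hv : ‖v‖ = 1) : IsAligned u v ↔ 1 / (finrank ℝ E : ℝ) ≤ ⟪u, v⟫ ^ 2 := by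
  have : Nontrivial E := ⟨u, 0, fun h ↦ by simp [h] at hu⟩
  have hdim : (0 : ℝ) < finrank ℝ E := Nat.cast_pos.2 finrank_pos
  rw [IsAligned, hu, hv, div_le_iff₀' hdim, one_pow, one_mul]

lemma not_isAligned_iff_of_norm_eq_one [FiniteDimensional ℝ E] {e g : E} (he : ‖e‖ = 1) :
    ¬ IsAligned e g ↔
      (finrank ℝ (ℝ ∙ e)ᗮ : ℝ) * ⟪e, g⟫ ^ 2 < ‖(ℝ ∙ e)ᗮ.starProjection g‖ ^ 2 := by
  have hpyth : ‖g‖ ^ 2 = ⟪e, g⟫ ^ 2 + ‖(ℝ ∙ e)ᗮ.starProjection g‖ ^ 2 := by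
    rw [(ℝ ∙ e).norm_sq_eq_add_norm_sq_starProjection g,
      Submodule.starProjection_unit_singleton ℝ he, norm_smul, he, mul_one, Real.norm_eq_abs,
      sq_abs]
  have hdim : (finrank ℝ E : ℝ) = 1 + finrank ℝ (ℝ ∙ e)ᗮ := by
    rw [← (ℝ ∙ e).finrank_add_finrank_orthogonal,
      finrank_span_singleton (norm_ne_zero_iff.1 (he ▸ one_ne_zero))]
    push_cast
    rfl
  rw [IsAligned, not_le, he, hpyth, hdim]
  constructor <;> intro h <;> linarith

variable [FiniteDimensional ℝ E] [MeasurableSpace E] [BorelSpace E]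

lemma measurableSet_isAligned : MeasurableSet {p : E × E | IsAligned p.1 p.2} :=
  measurableSet_le (by fun_prop) (by fun_prop)

lemma stdGaussian_not_isAligned_le_of_norm_eq_one {e : E} (he : ‖e‖ = 1) :
    stdGaussian E {g | ¬ IsAligned e g} ≤ 4 / 5 := by
  set H := (ℝ ∙ e)ᗮ
  have hlaw : HasLaw (fun g ↦ ⟪e, g⟫) (gaussianReal 0 1) (stdGaussian E) := by
    have henn : ‖e‖₊ = 1 := NNReal.eq he
    simpa only [henn, one_pow] using hasLaw_inner_stdGaussian e
  have hindep : (fun g ↦ ⟪e, g⟫) ⟂ᵢ[stdGaussian E] fun g ↦ ‖H.starProjection g‖ ^ 2 := by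
    have hline (g : E) : ⟪e, (ℝ ∙ e).starProjection g⟫ = ⟪e, g⟫ := by
      rw [← Submodule.inner_starProjection_left_eq_right,
        Submodule.starProjection_eq_self_iff.2 (Submodule.mem_span_singleton_self e)]
    simpa only [Function.comp_def, hline] using
      (indepFun_starProjection_orthogonal_stdGaussian (ℝ ∙ e)).comp
        (φ := fun y ↦ ⟪e, y⟫) (ψ := fun z ↦ ‖z‖ ^ 2) (by fun_prop) (by fun_prop)
  simp only [not_isAligned_iff_of_norm_eq_one he]
  exact measure_mul_sq_lt_le_of_indepFun (c := finrank ℝ H) hlaw (by fun_prop) hindep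
    (lintegral_norm_starProjection_sq_stdGaussian H).le

lemma one_fifth_le_stdGaussian_isAligned (u : E) :
    1 / 5 ≤ stdGaussian E {g | IsAligned u g} := by
  rcases eq_or_ne u 0 with rfl | hu
  · simp [isAligned_zero_left]
  have hscale : ‖u‖⁻¹ ≠ 0 := inv_ne_zero (norm_ne_zero_iff.2 hu)
  have hunit : ‖‖u‖⁻¹ • u‖ = 1 := norm_smul_inv_norm (𝕜 := ℝ) hu
  have hfail : stdGaussian E {g | IsAligned u g}ᶜ ≤ 4 / 5 := by
    simpa only [isAligned_smul_left_iff hscale, Set.compl_ofPred] using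
      stdGaussian_not_isAligned_le_of_norm_eq_one hunit
  have hmeas : MeasurableSet {g | IsAligned u g} :=
    measurableSet_isAligned.preimage measurable_prodMk_left
  have hsum : (1 / 5 : ENNReal) + 4 / 5 = 1 := by
    rw [ENNReal.div_add_div_same, ENNReal.div_eq_one_iff (by simp) (by simp)]
    norm_num
  rw [← compl_compl {g | IsAligned u g}, prob_compl_eq_one_sub hmeas.compl]
  exact ENNReal.le_sub_of_add_le_right (by simp) ((add_le_add_right hfail _).trans hsum.le)

variable {μ : Measure E}

lemma measure_isAligned_eq (hinv : ∀ O : E ≃ₗᵢ[ℝ] E, μ.map O = μ) {v w : E}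
    (hv : v ≠ 0) (hw : w ≠ 0) : μ {u | IsAligned u v} = μ {u | IsAligned u w} := by
  have hscale : ‖w‖ / ‖v‖ ≠ 0 := div_ne_zero (norm_ne_zero_iff.2 hw) (norm_ne_zero_iff.2 hv)
  obtain ⟨O, hO⟩ : ∃ O : E ≃ₗᵢ[ℝ] E, O w = (‖w‖ / ‖v‖) • v :=
    ⟨_, Submodule.reflection_sub (by rw [norm_smul]; simp [hv])⟩
  calc μ {u | IsAligned u v} = μ {u | IsAligned u (O w)} := by
        simp only [hO, isAligned_smul_right_iff hscale]
    _ = μ.map O {u | IsAligned u (O w)} := by rw [hinv]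
    _ = μ {u | IsAligned (O u) (O w)} :=
        Measure.map_apply O.continuous.measurable
          (measurableSet_isAligned.preimage measurable_prodMk_right)
    _ = μ {u | IsAligned u w} := by simp only [isAligned_map_iff]

lemma one_fifth_le_measure_isAligned [IsProbabilityMeasure μ]
    (hinv : ∀ O : E ≃ₗᵢ[ℝ] E, μ.map O = μ) {v : E} (hv : v ≠ 0) :
    1 / 5 ≤ μ {u | IsAligned u v} := by
  have : Nontrivial E := ⟨v, 0, hv⟩
  have hne : ∀ᵐ g ∂(stdGaussian E), g ≠ 0 := by
    simpa [ae_iff] using stdGaussian_singleton_zero (E := E)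
  calc 1 / 5 = ∫⁻ _, 1 / 5 ∂μ := by simp
    _ ≤ ∫⁻ u, stdGaussian E {g | IsAligned u g} ∂μ :=
        lintegral_mono one_fifth_le_stdGaussian_isAligned
    _ = (μ.prod (stdGaussian E)) {p | IsAligned p.1 p.2} :=
        (Measure.prod_apply measurableSet_isAligned).symm
    _ = ∫⁻ g, μ {u | IsAligned u g} ∂(stdGaussian E) :=
        Measure.prod_apply_symm measurableSet_isAligned
    _ = ∫⁻ _, μ {u | IsAligned u v} ∂(stdGaussian E) :=
        lintegral_congr_ae (hne.mono fun g hg ↦ measure_isAligned_eq hinv hg hv)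
    _ = μ {u | IsAligned u v} := by simp

theorem inner_sq_large_prob_general (μ ν : Measure E) [IsProbabilityMeasure μ]
    [IsProbabilityMeasure ν] (hμ : μ (Metric.sphere 0 1)ᶜ = 0) (hν : ν (Metric.sphere 0 1)ᶜ = 0)
    (hinv : ∀ O : E ≃ₗᵢ[ℝ] E, μ.map O = μ) :
    1 / 5 ≤ (μ.prod ν) {p | 1 / (finrank ℝ E : ℝ) ≤ ⟪p.1, p.2⟫ ^ 2} := by
  have hunit₁ : ∀ᵐ u ∂μ, ‖u‖ = 1 := by simpa [ae_iff, Set.compl_def] using hμ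
  have hunit₂ : ∀ᵐ v ∂ν, ‖v‖ = 1 := by simpa [ae_iff, Set.compl_def] using hν
  calc 1 / 5 = ∫⁻ _, 1 / 5 ∂ν := by simp
    _ ≤ ∫⁻ v, μ {u | IsAligned u v} ∂ν :=
        lintegral_mono_ae <| hunit₂.mono fun v hv ↦
          one_fifth_le_measure_isAligned hinv (norm_ne_zero_iff.1 (hv ▸ one_ne_zero))
    _ = (μ.prod ν) {p | IsAligned p.1 p.2} :=
        (Measure.prod_apply_symm measurableSet_isAligned).symm
    _ ≤ (μ.prod ν) {p | 1 / (finrank ℝ E : ℝ) ≤ ⟪p.1, p.2⟫ ^ 2} := by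
        refine measure_mono_ae ?_
        filter_upwards [Measure.quasiMeasurePreserving_fst.ae hunit₁,
          Measure.quasiMeasurePreserving_snd.ae hunit₂] with p hp₁ hp₂
        exact (isAligned_iff_of_norm_eq_one hp₁ hp₂).1

end Alignment

/-- If `u` and `v` are independent and uniformly distributed on the unit sphere
`S^{d-1} ⊆ ℝ^d` (i.e. each has the rotation-invariant probability law supported on the
sphere), then `⟨u,v⟩² ≥ 1/d` with probability at least `1/10`. -/
theorem inner_sq_large_prob {d : ℕ} (hd : 1 ≤ d)
    (μ : Measure (EuclideanSpace ℝ (Fin d))) [IsProbabilityMeasure μ]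
    (hsupp : μ (Metric.sphere (0 : EuclideanSpace ℝ (Fin d)) 1)ᶜ = 0)
    (hinv : ∀ O : EuclideanSpace ℝ (Fin d) ≃ₗᵢ[ℝ] EuclideanSpace ℝ (Fin d),
      μ.map O = μ) :
    (1 : ENNReal) / 10
      ≤ (μ.prod μ) {p : EuclideanSpace ℝ (Fin d) × EuclideanSpace ℝ (Fin d) |
          1 / (d : ℝ) ≤ ⟪p.1, p.2⟫ ^ 2} := by
  refine le_trans (b := 1 / 5) (by gcongr; norm_num) ?_
  simpa only [finrank_euclideanSpace_fin] using inner_sq_large_prob_general μ μ hsupp hsupp hinv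
end

section
/- Let d ≥ 1 and let M ∈ ℝ^{d×d} be a symmetric positive semidefinite matrix. If x is a random vector uniformly distributed on the Euclidean sphere of radius √d in ℝ^d, then Pr[ xᵀ M x ≥ tr(M)/d ] ≥ 1/10. -/
open MeasureTheory RealInnerProductSpace Matrix

/-!
Put `Z x = ⟪x, T x⟫`. In an orthonormal eigenbasis `b` of `T`, with eigenvalues `l i ≥ 0`, we have
`Z x = ∑ i, l i * ⟪b i, x⟫ ^ 2`. Under a law that is invariant under the orthogonal group, the
moments of `⟪u, x⟫` for a unit vector `u` do not depend on `u`; comparing orthonormal `u`, `v`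
with `(u ± v) / √2` also yields the mixed moments `𝔼 ⟪u, x⟫ ^ 2 ⟪v, x⟫ ^ 2 = 𝔼 ⟪u, x⟫ ^ 4 / 3`.
Expanding `‖x‖ ^ 2` and `‖x‖ ^ 4` in an orthonormal basis then gives, on the sphere of radius `r` in
dimension `n`, `𝔼 Z = r ^ 2 * tr T / n` and, by Cauchy–Schwarz with weights `l i`,
`𝔼 Z ^ 2 ≤ 3 n / (n + 2) * (𝔼 Z) ^ 2`. The Paley–Zygmund inequality at level `1 / n` bounds the
probability below by `(1 - 1 / n) ^ 2 * (n + 2) / (3 n)`, which is at least `1 / 6` as soon as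
`2 ≤ n`; in dimension one, `Z` is almost surely constant.
-/

section PaleyZygmund

variable {Ω : Type*} [MeasurableSpace Ω] {μ : Measure Ω} {X : Ω → ℝ}

theorem sq_integral_le_measureReal_univ_mul_integral_sq [IsFiniteMeasure μ] (hX : MemLp X 2 μ) :
    (∫ ω, X ω ∂μ) ^ 2 ≤ μ.real Set.univ * ∫ ω, X ω ^ 2 ∂μ := by
  have hX1 : Integrable X μ := hX.integrable one_le_two
  have quadratic_nonneg (t : ℝ) : 0 ≤ μ.real Set.univ * (t * t) + (-2 * ∫ ω, X ω ∂μ) * t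
      + ∫ ω, X ω ^ 2 ∂μ :=
    calc 0 ≤ ∫ ω, (t - X ω) ^ 2 ∂μ := integral_nonneg fun ω ↦ sq_nonneg _
      _ = ∫ ω, (t * t + (X ω ^ 2 + -2 * t * X ω)) ∂μ := by congr with ω; ring
      _ = _ := by
        rw [integral_add (integrable_const _) (hX.integrable_sq.fun_add (hX1.const_mul _)),
          integral_add hX.integrable_sq (hX1.const_mul _), integral_const, integral_const_mul,
          smul_eq_mul]
        ring
  have := discrim_le_zero quadratic_nonneg
  rw [discrim] at this
  linarith

theorem paley_zygmund [IsProbabilityMeasure μ] (hX : MemLp X 2 μ) (hX0 : 0 ≤ ∫ ω, X ω ∂μ)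
    {θ : ℝ} (hθ0 : 0 ≤ θ) (hθ1 : θ ≤ 1) :
    ((1 - θ) * ∫ ω, X ω ∂μ) ^ 2 ≤ μ.real {ω | θ * ∫ ω, X ω ∂μ ≤ X ω} * ∫ ω, X ω ^ 2 ∂μ := by
  have hX1 : Integrable X μ := hX.integrable one_le_two
  set m := ∫ ω, X ω ∂μ
  set A := {ω | θ * m ≤ X ω}
  have hA : NullMeasurableSet A μ := nullMeasurableSet_le aemeasurable_const hX.1.aemeasurable
  have integral_compl_le : ∫ ω in Aᶜ, X ω ∂μ ≤ θ * m :=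
    calc ∫ ω in Aᶜ, X ω ∂μ ≤ ∫ _ in Aᶜ, θ * m ∂μ :=
          setIntegral_mono_on₀ hX1.integrableOn (integrable_const _).integrableOn hA.compl
            fun ω hω ↦ (not_le.1 (show ¬θ * m ≤ X ω from hω)).le
      _ = μ.real Aᶜ * (θ * m) := by simp
      _ ≤ θ * m := mul_le_of_le_one_left (mul_nonneg hθ0 hX0) measureReal_le_one
  have le_integral : (1 - θ) * m ≤ ∫ ω in A, X ω ∂μ := by
    linarith [integral_add_compl₀ hA hX1]
  calc ((1 - θ) * m) ^ 2 ≤ (∫ ω in A, X ω ∂μ) ^ 2 :=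
        pow_le_pow_left₀ (mul_nonneg (sub_nonneg.2 hθ1) hX0) le_integral 2
    _ ≤ μ.real A * ∫ ω in A, X ω ^ 2 ∂μ := by
        simpa using sq_integral_le_measureReal_univ_mul_integral_sq (hX.restrict A)
    _ ≤ μ.real A * ∫ ω, X ω ^ 2 ∂μ := by
        refine mul_le_mul_of_nonneg_left ?_ measureReal_nonneg
        exact setIntegral_le_integral hX.integrable_sq (ae_of_all _ fun ω ↦ sq_nonneg _)

end PaleyZygmund

section QuadraticForm

variable {E : Type*} [NormedAddCommGroup E] [InnerProductSpace ℝ E]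

theorem inner_map_self_eq_trace_mul_of_finrank_eq_one (hE : Module.finrank ℝ E = 1)
    (T : E →ₗ[ℝ] E) (x : E) : ⟪x, T x⟫ = T.trace ℝ E * ‖x‖ ^ 2 := by
  have : FiniteDimensional ℝ E := .of_finrank_pos (hE ▸ one_pos)
  obtain ⟨c, rfl, -⟩ := T.existsUnique_eq_smul_id_of_finrank_eq_one hE
  simp [inner_smul_right, hE]

variable [FiniteDimensional ℝ E] {T : E →ₗ[ℝ] E} {n : ℕ}

theorem inner_map_self_eq_sum_eigenvalues (hT : T.IsSymmetric) (hn : Module.finrank ℝ E = n)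
    (x : E) :
    ⟪x, T x⟫ = ∑ i, hT.eigenvalues hn i * ⟪hT.eigenvectorBasis hn i, x⟫ ^ 2 := by
  rw [← (hT.eigenvectorBasis hn).sum_inner_mul_inner]
  refine Finset.sum_congr rfl fun i _ ↦ ?_
  rw [← hT, hT.apply_eigenvectorBasis, RCLike.ofReal_real_eq_id, id, real_inner_smul_left,
    real_inner_comm]
  ring

theorem sq_inner_map_self_le (hT : T.IsPositive) (hn : Module.finrank ℝ E = n) (x : E) :
    ⟪x, T x⟫ ^ 2 ≤ T.trace ℝ E * ∑ i, hT.isSymmetric.eigenvalues hn i *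
      ⟪hT.isSymmetric.eigenvectorBasis hn i, x⟫ ^ 4 := by
  rw [inner_map_self_eq_sum_eigenvalues hT.isSymmetric hn,
    hT.isSymmetric.trace_eq_sum_eigenvalues hn]
  have eigenvalue_nonneg := hT.nonneg_eigenvalues hn
  exact Finset.sum_sq_le_sum_mul_sum_of_sq_le_mul _ (fun i _ ↦ eigenvalue_nonneg i)
    (fun i _ ↦ mul_nonneg (eigenvalue_nonneg i) (by positivity)) fun i _ ↦ le_of_eq (by ring)

end QuadraticForm

section OrthogonalInvariance

variable {E : Type*} [NormedAddCommGroup E] [InnerProductSpace ℝ E] [MeasurableSpace E]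

/-- A measure on a real inner product space is orthogonally invariant if it is preserved by every
linear isometric automorphism, reflections included. On a Euclidean sphere, the uniform law is the
only such probability measure. -/
def IsOrthogonallyInvariant (μ : Measure E) : Prop :=
  ∀ O : E ≃ₗᵢ[ℝ] E, μ.map O = μ

namespace IsOrthogonallyInvariant

variable [BorelSpace E] {μ : Measure E} {u v : E}

theorem integral_inner_pow_eq_of_norm_eq (hμ : IsOrthogonallyInvariant μ) (h : ‖u‖ = ‖v‖) (k : ℕ) :
    ∫ x, ⟪u, x⟫ ^ k ∂μ = ∫ x, ⟪v, x⟫ ^ k ∂μ := by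
  set O := (ℝ ∙ (u - v))ᗮ.reflection
  have hO : O u = v := Submodule.reflection_sub h
  calc ∫ x, ⟪u, x⟫ ^ k ∂μ = ∫ x, ⟪v, O x⟫ ^ k ∂μ := by simp_rw [← hO, O.inner_map_map]
    _ = ∫ x, ⟪v, x⟫ ^ k ∂(μ.map O) :=
        (integral_map O.continuous.aemeasurable
          (f := fun x ↦ ⟪v, x⟫ ^ k) (by fun_prop)).symm
    _ = ∫ x, ⟪v, x⟫ ^ k ∂μ := by rw [hμ O]

theorem integral_inner_pow (hμ : IsOrthogonallyInvariant μ) (hu : ‖u‖ = 1) (v : E) (k : ℕ) :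
    ∫ x, ⟪v, x⟫ ^ k ∂μ = ‖v‖ ^ k * ∫ x, ⟪u, x⟫ ^ k ∂μ := by
  have norm_eq : ‖v‖ = ‖‖v‖ • u‖ := by simp [norm_smul, hu]
  simp_rw [hμ.integral_inner_pow_eq_of_norm_eq norm_eq, real_inner_smul_left, mul_pow,
    integral_const_mul]

end IsOrthogonallyInvariant

variable [BorelSpace E] {μ : Measure E}

theorem integrable_inner_pow {k : ℕ} (hμk : Integrable (fun x ↦ ‖x‖ ^ k) μ) (u : E) :
    Integrable (fun x ↦ ⟪u, x⟫ ^ k) μ := by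
  refine (hμk.const_mul (‖u‖ ^ k)).mono' (by fun_prop) (ae_of_all _ fun x ↦ ?_)
  rw [norm_pow, ← mul_pow]
  gcongr
  exact norm_inner_le_norm u x

theorem integrable_inner_sq_mul_inner_sq (hμ4 : Integrable (fun x ↦ ‖x‖ ^ 4) μ) (u v : E) :
    Integrable (fun x ↦ ⟪u, x⟫ ^ 2 * ⟪v, x⟫ ^ 2) μ := by
  refine ((integrable_inner_pow hμ4 u).add (integrable_inner_pow hμ4 v)).mono' (by fun_prop)
    (ae_of_all _ fun x ↦ ?_)
  rw [Real.norm_of_nonneg (by positivity)]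
  simp only [Pi.add_apply]
  nlinarith [sq_nonneg (⟪u, x⟫ ^ 2 - ⟪v, x⟫ ^ 2), sq_nonneg (⟪u, x⟫ ^ 2 + ⟪v, x⟫ ^ 2)]

namespace IsOrthogonallyInvariant

variable {u v : E}

theorem three_mul_integral_inner_sq_mul_inner_sq (hμ : IsOrthogonallyInvariant μ)
    (hμ4 : Integrable (fun x ↦ ‖x‖ ^ 4) μ) (hu : ‖u‖ = 1) (hv : ‖v‖ = 1) (huv : ⟪u, v⟫ = 0) :
    3 * ∫ x, ⟪u, x⟫ ^ 2 * ⟪v, x⟫ ^ 2 ∂μ = ∫ x, ⟪u, x⟫ ^ 4 ∂μ := by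
  have norm_add_pow : ‖u + v‖ ^ 4 = 4 := by
    rw [pow_mul ‖u + v‖ 2 2, norm_add_sq_real, hu, hv, huv]; norm_num
  have norm_sub_pow : ‖u - v‖ ^ 4 = 4 := by
    rw [pow_mul ‖u - v‖ 2 2, norm_sub_sq_real, hu, hv, huv]; norm_num
  have integrable_pow := integrable_inner_pow hμ4
  have polarization : 12 * ∫ x, ⟪u, x⟫ ^ 2 * ⟪v, x⟫ ^ 2 ∂μ =
      ∫ x, ⟪u + v, x⟫ ^ 4 ∂μ + ∫ x, ⟪u - v, x⟫ ^ 4 ∂μ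
        - 2 * (∫ x, ⟪u, x⟫ ^ 4 ∂μ + ∫ x, ⟪v, x⟫ ^ 4 ∂μ) := by
    rw [← integral_add (integrable_pow _) (integrable_pow _),
      ← integral_add (integrable_pow _) (integrable_pow _), ← integral_const_mul,
      ← integral_const_mul, ← integral_sub ((integrable_pow _).fun_add (integrable_pow _))
        (((integrable_pow _).fun_add (integrable_pow _)).const_mul _)]
    congr with x
    simp only [inner_add_left, inner_sub_left]
    ring
  rw [hμ.integral_inner_pow hu (u + v), hμ.integral_inner_pow hu (u - v),
    hμ.integral_inner_pow hu v, norm_add_pow, norm_sub_pow, hv] at polarization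
  linarith

theorem three_mul_sum_integral_inner_sq_mul_inner_sq {ι : Type*} [Fintype ι]
    (hμ : IsOrthogonallyInvariant μ) (hμ4 : Integrable (fun x ↦ ‖x‖ ^ 4) μ)
    (b : OrthonormalBasis ι ℝ E) (i : ι) :
    3 * ∑ j, ∫ x, ⟪b i, x⟫ ^ 2 * ⟪b j, x⟫ ^ 2 ∂μ =
      (Fintype.card ι + 2) * ∫ x, ⟪b i, x⟫ ^ 4 ∂μ := by
  classical
  have entry (j : ι) : 3 * ∫ x, ⟪b i, x⟫ ^ 2 * ⟪b j, x⟫ ^ 2 ∂μ =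
      ∫ x, ⟪b i, x⟫ ^ 4 ∂μ + if i = j then 2 * ∫ x, ⟪b i, x⟫ ^ 4 ∂μ else 0 := by
    split_ifs with hij
    · subst hij
      simp only [← pow_add]
      ring
    · rw [add_zero, hμ.three_mul_integral_inner_sq_mul_inner_sq hμ4 (b.norm_eq_one i)
        (b.norm_eq_one j) (b.inner_eq_zero hij)]
  simp_rw [Finset.mul_sum, entry, Finset.sum_add_distrib]
  simp only [Finset.sum_const, Finset.card_univ, nsmul_eq_mul, Finset.sum_ite_eq, Finset.mem_univ,
    ↓reduceIte]
  ring

variable [FiniteDimensional ℝ E]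

theorem finrank_mul_integral_inner_sq (hμ : IsOrthogonallyInvariant μ)
    (hμ2 : Integrable (fun x ↦ ‖x‖ ^ 2) μ) (hu : ‖u‖ = 1) :
    Module.finrank ℝ E * ∫ x, ⟪u, x⟫ ^ 2 ∂μ = ∫ x, ‖x‖ ^ 2 ∂μ := by
  let b := stdOrthonormalBasis ℝ E
  calc Module.finrank ℝ E * ∫ x, ⟪u, x⟫ ^ 2 ∂μ = ∑ i, ∫ x, ⟪b i, x⟫ ^ 2 ∂μ := by
        simp [hμ.integral_inner_pow hu (b _)]
    _ = ∫ x, ∑ i, ⟪b i, x⟫ ^ 2 ∂μ :=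
        (integral_finsetSum _ fun i _ ↦ integrable_inner_pow hμ2 (b i)).symm
    _ = ∫ x, ‖x‖ ^ 2 ∂μ := by simp_rw [b.sum_sq_inner_right]

theorem finrank_mul_integral_inner_pow_four (hμ : IsOrthogonallyInvariant μ)
    (hμ4 : Integrable (fun x ↦ ‖x‖ ^ 4) μ) (hu : ‖u‖ = 1) :
    Module.finrank ℝ E * (Module.finrank ℝ E + 2) * ∫ x, ⟪u, x⟫ ^ 4 ∂μ =
      3 * ∫ x, ‖x‖ ^ 4 ∂μ := by
  let b := stdOrthonormalBasis ℝ E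
  have integrable_entry (i j) := integrable_inner_sq_mul_inner_sq hμ4 (b i) (b j)
  have norm_pow_four (x : E) : ‖x‖ ^ 4 = ∑ i, ∑ j, ⟪b i, x⟫ ^ 2 * ⟪b j, x⟫ ^ 2 := by
    rw [← Finset.sum_mul_sum, b.sum_sq_inner_right]
    ring
  simp_rw [norm_pow_four]
  rw [integral_finsetSum _ fun i _ ↦ integrable_finsetSum _ fun j _ ↦ integrable_entry i j,
    Finset.mul_sum]
  simp_rw [integral_finsetSum _ fun j _ ↦ integrable_entry _ j,
    hμ.three_mul_sum_integral_inner_sq_mul_inner_sq hμ4 b, hμ.integral_inner_pow hu (b _)]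
  simp only [Fintype.card_fin, OrthonormalBasis.norm_eq_one, one_pow, one_mul, Finset.sum_const,
    Finset.card_univ, nsmul_eq_mul]
  ring

variable {T : E →ₗ[ℝ] E}

theorem finrank_mul_integral_inner_map_self (hμ : IsOrthogonallyInvariant μ)
    (hμ2 : Integrable (fun x ↦ ‖x‖ ^ 2) μ) (hT : T.IsSymmetric) :
    Module.finrank ℝ E * ∫ x, ⟪x, T x⟫ ∂μ = T.trace ℝ E * ∫ x, ‖x‖ ^ 2 ∂μ := by
  simp_rw [inner_map_self_eq_sum_eigenvalues hT rfl]
  rw [integral_finsetSum _ fun i _ ↦ (integrable_inner_pow hμ2 _).const_mul _,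
    hT.trace_eq_sum_eigenvalues rfl, Finset.mul_sum]
  simp_rw [integral_const_mul, mul_left_comm (Module.finrank ℝ E : ℝ),
    hμ.finrank_mul_integral_inner_sq hμ2 (OrthonormalBasis.norm_eq_one _ _)]
  simp [Finset.sum_mul]

theorem finrank_mul_integral_sq_inner_map_self_le (hμ : IsOrthogonallyInvariant μ)
    (hμ4 : Integrable (fun x ↦ ‖x‖ ^ 4) μ) (hT : T.IsPositive) :
    Module.finrank ℝ E * (Module.finrank ℝ E + 2) * ∫ x, ⟪x, T x⟫ ^ 2 ∂μ ≤
      3 * T.trace ℝ E ^ 2 * ∫ x, ‖x‖ ^ 4 ∂μ := by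
  let n : ℝ := Module.finrank ℝ E
  let l := hT.isSymmetric.eigenvalues rfl
  let b := hT.isSymmetric.eigenvectorBasis rfl
  have integrable_summand (i) : Integrable (fun x ↦ l i * ⟪b i, x⟫ ^ 4) μ :=
    (integrable_inner_pow hμ4 _).const_mul _
  calc n * (n + 2) * ∫ x, ⟪x, T x⟫ ^ 2 ∂μ
      ≤ n * (n + 2) * ∫ x, T.trace ℝ E * ∑ i, l i * ⟪b i, x⟫ ^ 4 ∂μ := by
        refine mul_le_mul_of_nonneg_left ?_ (by positivity)
        exact integral_mono_of_nonneg (ae_of_all _ fun x ↦ sq_nonneg _)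
          ((integrable_finsetSum _ fun i _ ↦ integrable_summand i).const_mul _)
          (ae_of_all _ fun x ↦ sq_inner_map_self_le hT rfl x)
    _ = T.trace ℝ E * ∑ i, l i * (n * (n + 2) * ∫ x, ⟪b i, x⟫ ^ 4 ∂μ) := by
        rw [integral_const_mul, integral_finsetSum _ fun i _ ↦ integrable_summand i,
          mul_left_comm, Finset.mul_sum]
        simp_rw [integral_const_mul, mul_left_comm (n * (n + 2))]
    _ = T.trace ℝ E * ((∑ i, l i) * (3 * ∫ x, ‖x‖ ^ 4 ∂μ)) := by
        simp_rw [n, hμ.finrank_mul_integral_inner_pow_four hμ4 (b.norm_eq_one _),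
          Finset.sum_mul]
    _ = 3 * T.trace ℝ E ^ 2 * ∫ x, ‖x‖ ^ 4 ∂μ := by
        have trace_eq : T.trace ℝ E = ∑ i, l i := hT.isSymmetric.trace_eq_sum_eigenvalues rfl
        rw [← trace_eq]
        ring

end IsOrthogonallyInvariant

end OrthogonalInvariance

section Sphere

variable {E : Type*} [NormedAddCommGroup E] [MeasurableSpace E] {μ : Measure E} {r : ℝ}

theorem integral_norm_pow_of_ae_norm_eq [IsProbabilityMeasure μ] (hr : ∀ᵐ x ∂μ, ‖x‖ = r)
    (k : ℕ) : ∫ x, ‖x‖ ^ k ∂μ = r ^ k :=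
  calc ∫ x, ‖x‖ ^ k ∂μ = ∫ _, r ^ k ∂μ := integral_congr_ae (hr.mono fun x hx ↦ by simp [hx])
    _ = r ^ k := by simp

theorem integrable_norm_pow_of_ae_norm_eq [IsFiniteMeasure μ] (hr : ∀ᵐ x ∂μ, ‖x‖ = r) (k : ℕ) :
    Integrable (fun x ↦ ‖x‖ ^ k) μ :=
  (integrable_const (r ^ k)).congr (hr.mono fun x hx ↦ by simp [hx])

theorem memLp_of_continuous_of_ae_norm_eq [ProperSpace E] [OpensMeasurableSpace E]
    [IsFiniteMeasure μ] (hr : ∀ᵐ x ∂μ, ‖x‖ = r) {f : E → ℝ} (hf : Continuous f) (p : ENNReal) :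
    MemLp f p μ := by
  obtain ⟨C, hC⟩ := (isCompact_sphere (0 : E) r).exists_bound_of_continuousOn hf.continuousOn
  exact .of_bound hf.aestronglyMeasurable C
    (hr.mono fun x hx ↦ hC x (mem_sphere_zero_iff_norm.2 hx))

variable [InnerProductSpace ℝ E] [FiniteDimensional ℝ E] [Nontrivial E] [BorelSpace E]
  [IsProbabilityMeasure μ] {T : E →ₗ[ℝ] E}

namespace IsOrthogonallyInvariant

theorem integral_inner_map_self_of_ae_norm_eq (hμ : IsOrthogonallyInvariant μ)
    (hr : ∀ᵐ x ∂μ, ‖x‖ = r) (hT : T.IsSymmetric) :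
    ∫ x, ⟪x, T x⟫ ∂μ = r ^ 2 * T.trace ℝ E / Module.finrank ℝ E := by
  have h := hμ.finrank_mul_integral_inner_map_self (integrable_norm_pow_of_ae_norm_eq hr 2) hT
  rw [integral_norm_pow_of_ae_norm_eq hr] at h
  rw [eq_div_iff (Nat.cast_ne_zero.2 Module.finrank_pos.ne')]
  linarith

theorem integral_sq_inner_map_self_le_of_ae_norm_eq (hμ : IsOrthogonallyInvariant μ)
    (hr : ∀ᵐ x ∂μ, ‖x‖ = r) (hT : T.IsPositive) :
    ∫ x, ⟪x, T x⟫ ^ 2 ∂μ ≤ 3 * Module.finrank ℝ E / (Module.finrank ℝ E + 2) *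
      (r ^ 2 * T.trace ℝ E / Module.finrank ℝ E) ^ 2 := by
  have h := hμ.finrank_mul_integral_sq_inner_map_self_le
    (integrable_norm_pow_of_ae_norm_eq hr 4) hT
  rw [integral_norm_pow_of_ae_norm_eq hr] at h
  have finrank_pos : (0 : ℝ) < Module.finrank ℝ E := Nat.cast_pos.2 Module.finrank_pos
  field_simp
  linarith

theorem le_measureReal_inner_map_self_ge (hμ : IsOrthogonallyInvariant μ)
    (hr : ∀ᵐ x ∂μ, ‖x‖ = r) (hT : T.IsPositive) {θ : ℝ} (hθ0 : 0 ≤ θ) (hθ1 : θ ≤ 1) :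
    (1 - θ) ^ 2 * ((Module.finrank ℝ E + 2) / (3 * Module.finrank ℝ E)) ≤
      μ.real {x | θ * (r ^ 2 * T.trace ℝ E / Module.finrank ℝ E) ≤ ⟪x, T x⟫} := by
  have first_moment := hμ.integral_inner_map_self_of_ae_norm_eq hr hT.isSymmetric
  have second_moment := hμ.integral_sq_inner_map_self_le_of_ae_norm_eq hr hT
  have one_le_finrank : (1 : ℝ) ≤ Module.finrank ℝ E := Nat.one_le_cast.2 Module.finrank_pos
  have trace_nonneg := hT.trace_nonneg
  generalize (Module.finrank ℝ E : ℝ) = n at *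
  have mean_nonneg : 0 ≤ r ^ 2 * T.trace ℝ E / n := by positivity
  set m := r ^ 2 * T.trace ℝ E / n
  rcases mean_nonneg.eq_or_lt with mean_eq_zero | mean_pos
  · have event_eq_univ : {x | θ * m ≤ ⟪x, T x⟫} = Set.univ :=
      Set.eq_univ_of_forall fun x ↦ by simpa [← mean_eq_zero] using hT.inner_nonneg_right x
    rw [event_eq_univ, probReal_univ]
    exact mul_le_one₀ (pow_le_one₀ (by linarith) (by linarith)) (by positivity)
      ((div_le_one (by positivity)).2 (by linarith))
  · have hcont : Continuous fun x ↦ ⟪x, T x⟫ :=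
      continuous_id.inner T.continuous_of_finiteDimensional
    have paley_zygmund_bound := paley_zygmund (memLp_of_continuous_of_ae_norm_eq hr hcont 2)
      (first_moment ▸ mean_nonneg) hθ0 hθ1
    rw [first_moment] at paley_zygmund_bound
    set P := μ.real {x | θ * m ≤ ⟪x, T x⟫}
    have : (1 - θ) ^ 2 * m ^ 2 ≤ P * (3 * n / (n + 2)) * m ^ 2 :=
      calc (1 - θ) ^ 2 * m ^ 2 = ((1 - θ) * m) ^ 2 := by ring
        _ ≤ P * ∫ x, ⟪x, T x⟫ ^ 2 ∂μ := paley_zygmund_bound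
        _ ≤ P * (3 * n / (n + 2) * m ^ 2) :=
            mul_le_mul_of_nonneg_left second_moment measureReal_nonneg
        _ = P * (3 * n / (n + 2)) * m ^ 2 := by ring
    rw [← inv_div, ← div_eq_mul_inv, div_le_iff₀ (by positivity)]
    exact le_of_mul_le_mul_right this (by positivity)

end IsOrthogonallyInvariant

theorem one_sixth_le_one_sub_inv_sq_mul {n : ℝ} (hn : 2 ≤ n) :
    1 / 6 ≤ (1 - n⁻¹) ^ 2 * ((n + 2) / (3 * n)) := by
  have factored : (1 - n⁻¹) ^ 2 * ((n + 2) / (3 * n)) - 1 / 6 =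
      (n - 2) * (n ^ 2 + 2 * (n - 1)) / (6 * n ^ 3) := by
    field_simp
    ring
  have : 0 ≤ (n - 2) * (n ^ 2 + 2 * (n - 1)) / (6 * n ^ 3) :=
    div_nonneg (mul_nonneg (by linarith) (by nlinarith)) (by positivity)
  linarith

theorem quadratic_form_large_prob_general (hμ : IsOrthogonallyInvariant μ)
    (hr : ∀ᵐ x ∂μ, ‖x‖ = r) (hT : T.IsPositive) :
    1 / 6 ≤ μ {x | r ^ 2 * T.trace ℝ E / Module.finrank ℝ E ^ 2 ≤ ⟪x, T x⟫} := by
  suffices 1 / 6 ≤ μ.real {x | r ^ 2 * T.trace ℝ E / Module.finrank ℝ E ^ 2 ≤ ⟪x, T x⟫} by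
    simpa [ENNReal.ofReal_inv_of_pos] using ENNReal.ofReal_le_of_le_toReal this
  rcases Nat.eq_or_lt_of_le (Module.finrank_pos (R := ℝ) (M := E)) with hE | hE
  · have event_ae : ∀ᵐ x ∂μ, r ^ 2 * T.trace ℝ E / Module.finrank ℝ E ^ 2 ≤ ⟪x, T x⟫ :=
      hr.mono fun x hx ↦ by
        simp [inner_map_self_eq_trace_mul_of_finrank_eq_one hE.symm, hx, ← hE, mul_comm]
    rw [measureReal_congr (Filter.eventuallyEq_univ.2 event_ae), probReal_univ]
    norm_num
  · have two_le_finrank : (2 : ℝ) ≤ Module.finrank ℝ E := by exact_mod_cast hE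
    have threshold_eq : r ^ 2 * T.trace ℝ E / (Module.finrank ℝ E : ℝ) ^ 2 =
        (Module.finrank ℝ E : ℝ)⁻¹ * (r ^ 2 * T.trace ℝ E / Module.finrank ℝ E) := by ring
    rw [threshold_eq]
    exact (one_sixth_le_one_sub_inv_sq_mul two_le_finrank).trans <|
      hμ.le_measureReal_inner_map_self_ge hr hT (by positivity)
        (inv_le_one_of_one_le₀ (by linarith))

end Sphere

theorem trace_toEuclideanLin_s19 {𝕜 ι : Type*} [RCLike 𝕜] [Fintype ι] [DecidableEq ι]
    (M : Matrix ι ι 𝕜) : (toEuclideanLin M).trace 𝕜 (EuclideanSpace 𝕜 ι) = M.trace := by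
  rw [toEuclideanLin_eq_toLin_orthonormal, trace_toLin_eq]

/-- If `M ⪰ 0` and `x` is uniformly distributed on the sphere of radius `√d` in `ℝ^d`
(i.e. its law is the rotation-invariant probability measure supported on that sphere),
then `xᵀMx ≥ tr(M)/d` with probability at least `1/10`. -/
theorem quadratic_form_large_prob {d : ℕ} (hd : 1 ≤ d)
    (M : Matrix (Fin d) (Fin d) ℝ) (hM : M.PosSemidef)
    (μ : Measure (EuclideanSpace ℝ (Fin d))) [IsProbabilityMeasure μ]
    (hsupp : μ (Metric.sphere (0 : EuclideanSpace ℝ (Fin d)) (Real.sqrt d))ᶜ = 0)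
    (hinv : ∀ O : EuclideanSpace ℝ (Fin d) ≃ₗᵢ[ℝ] EuclideanSpace ℝ (Fin d),
      μ.map O = μ) :
    (1 : ENNReal) / 10
      ≤ μ {x : EuclideanSpace ℝ (Fin d) |
          M.trace / (d : ℝ) ≤ ⟪x, Matrix.toEuclideanLin M x⟫} := by
  have : Nonempty (Fin d) := ⟨⟨0, hd⟩⟩
  have norm_ae : ∀ᵐ x ∂μ, ‖x‖ = √d := by
    filter_upwards [mem_ae_iff.2 hsupp] with x hx using mem_sphere_zero_iff_norm.1 hx
  have threshold_eq : √d ^ 2 * M.trace / (d : ℝ) ^ 2 = M.trace / d := by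
    rw [Real.sq_sqrt d.cast_nonneg]
    field_simp
  have h := quadratic_form_large_prob_general hinv norm_ae (isPositive_toEuclideanLin_iff.2 hM)
  rw [trace_toEuclideanLin_s19, finrank_euclideanSpace_fin, threshold_eq] at h
  exact (by gcongr; norm_num : (1 : ENNReal) / 10 ≤ 1 / 6).trans h
end
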